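/- arXiv:math/0407326 — 11 statements merged into one kernel-verified Lean document; each statement's English description precedes it below -/
import Mathlib

section
/- For every natural number n, the exponent of the largest power of 2 dividing the n-th Catalan number C_n equals δ(n+1) − 1, i.e., the 2-adic valuation of C_n is one less than the number of ones in the binary expansion of n+1. -/
/-!
Legendre's formula `(p - 1) * v_p(m!) = m - s_p(m)`, where `s_p` is the sum of the base `p` digits,
applied to `(2n)! = C_n * (n + 1)! * n!` gives
`(p - 1) * v_p(C_n) + s_p(2n) + 1 = s_p(n + 1) + s_p(n)` for every prime `p`. When `p = 2`, the
terms `s_2(2n)` and `s_2(n)` cancel, since doubling only appends a zero to the binary expansion.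
-/

open scoped Nat

theorem sum_eq_count_one_of_forall_lt_two {l : List ℕ} (h : ∀ x ∈ l, x < 2) :
    l.sum = l.count 1 := by
  have h_subset : l.toFinset ⊆ Finset.range 2 := fun x hx =>
    Finset.mem_range.mpr (h x (List.mem_toFinset.mp hx))
  simpa [Finset.sum_range_succ] using Finset.sum_list_count_of_subset l _ h_subset

theorem sum_digits_base_mul {b : ℕ} (hb : 1 < b) (n : ℕ) :
    (b.digits (b * n)).sum = (b.digits n).sum := by
  rcases n.eq_zero_or_pos with rfl | hn
  · rw [mul_zero]
  · rw [Nat.digits_base_mul hb hn, List.sum_cons, zero_add]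

theorem catalan_mul_factorial_succ_mul_factorial (n : ℕ) :
    catalan n * (n + 1)! * n ! = (2 * n)! := by
  calc catalan n * (n + 1)! * n !
      = (n + 1) * catalan n * n ! * n ! := by rw [Nat.factorial_succ]; ring
    _ = (n + n).choose n * n ! * n ! := by
      rw [succ_mul_catalan_eq_centralBinom, Nat.centralBinom_eq_two_mul_choose, two_mul]
    _ = (2 * n)! := by rw [Nat.add_choose_mul_factorial_mul_factorial, two_mul]

theorem catalan_ne_zero (n : ℕ) : catalan n ≠ 0 :=
  right_ne_zero_of_mul (succ_mul_catalan_eq_centralBinom n ▸ n.centralBinom_ne_zero)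

section Prime

variable (p : ℕ) [Fact p.Prime] (n : ℕ)

theorem sub_one_mul_padicValNat_factorial_add_sum_digits :
    (p - 1) * padicValNat p n ! + (p.digits n).sum = n := by
  rw [sub_one_mul_padicValNat_factorial, Nat.sub_add_cancel (Nat.digit_sum_le p n)]

theorem padicValNat_two_mul_factorial_eq_catalan_add :
    padicValNat p (2 * n)! =
      padicValNat p (catalan n) + padicValNat p (n + 1)! + padicValNat p n ! := by
  have h_succ := (n + 1).factorial_ne_zero
  rw [← catalan_mul_factorial_succ_mul_factorial,
    padicValNat.mul (mul_ne_zero (catalan_ne_zero n) h_succ) n.factorial_ne_zero,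
    padicValNat.mul (catalan_ne_zero n) h_succ]

theorem sub_one_mul_padicValNat_catalan_add_sum_digits :
    (p - 1) * padicValNat p (catalan n) + (p.digits (2 * n)).sum + 1 =
      (p.digits (n + 1)).sum + (p.digits n).sum := by
  have h_val := congrArg ((p - 1) * ·) (padicValNat_two_mul_factorial_eq_catalan_add p n)
  simp only [mul_add] at h_val
  linarith [sub_one_mul_padicValNat_factorial_add_sum_digits p n,
    sub_one_mul_padicValNat_factorial_add_sum_digits p (n + 1),
    sub_one_mul_padicValNat_factorial_add_sum_digits p (2 * n)]

end Prime

/-- The 2-adic valuation of the `n`-th Catalan number equals one less than the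
number of ones in the binary expansion of `n + 1`. -/
theorem catalan_two_adic_valuation (n : ℕ) :
    padicValNat 2 (catalan n) = (Nat.digits 2 (n + 1)).count 1 - 1 := by
  have h_catalan := sub_one_mul_padicValNat_catalan_add_sum_digits 2 n
  have h_double := sum_digits_base_mul one_lt_two n
  have h_count : (Nat.digits 2 (n + 1)).sum = (Nat.digits 2 (n + 1)).count 1 :=
    sum_eq_count_one_of_forall_lt_two fun _ => Nat.digits_lt_base one_lt_two
  lia
end

section
/- The Catalan number C_n is odd if and only if n = 2^h − 1 for some natural number h. -/
/-!
The generating function `C` of the Catalan numbers satisfies `C = 1 + X * C ^ 2`. Modulo `2`,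
squaring a power series amounts to substituting `X ^ 2` for `X`, so `C ≡ 1 + X * C(X ^ 2)`:
positive even indices carry even Catalan numbers, and `catalan (2 * m + 1) ≡ catalan m`.
The indices of odd Catalan numbers are therefore generated from `0` by `m ↦ 2 * m + 1`, as are
the numbers `2 ^ h - 1`.
-/

open PowerSeries

theorem coeff_pow_expChar {R : Type*} [CommRing R] (p : ℕ) [ExpChar R p] (f : R⟦X⟧) (n : ℕ) :
    coeff n (f ^ p) = if p ∣ n then coeff (n / p) f ^ p else 0 := by
  have hp : p ≠ 0 := expChar_ne_zero R p
  have frobenius_expand : map (frobenius R p) (expand p hp f) = f ^ p :=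
    MvPowerSeries.map_frobenius_expand p hp
  rw [← frobenius_expand, coeff_map, coeff_expand, apply_ite (frobenius R p), map_zero,
    frobenius_def]

theorem catalan_succ_eq_coeff_catalanSeries_sq (n : ℕ) :
    catalan (n + 1) = coeff n (catalanSeries ^ 2) := by
  simp only [catalan_succ', sq, coeff_mul, catalanSeries_coeff]

theorem natCast_catalan_succ_of_charTwo (R : Type*) [CommRing R] [CharP R 2] (n : ℕ) :
    (catalan (n + 1) : R) = if 2 ∣ n then (catalan (n / 2) : R) ^ 2 else 0 := by
  have : ExpChar R 2 := .prime Nat.prime_two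
  have cast_coeff (f : ℕ⟦X⟧) (k : ℕ) :
      ((coeff k f : ℕ) : R) = coeff k (map (Nat.castRingHom R) f) := rfl
  rw [catalan_succ_eq_coeff_catalanSeries_sq, cast_coeff, map_pow, coeff_pow_expChar,
    ← cast_coeff, catalanSeries_coeff]

theorem even_catalan_two_mul_add_two (m : ℕ) : Even (catalan (2 * m + 2)) := by
  rw [← ZMod.natCast_eq_zero_iff_even, natCast_catalan_succ_of_charTwo, if_neg (by lia)]

theorem odd_catalan_two_mul_add_one_iff (m : ℕ) :
    Odd (catalan (2 * m + 1)) ↔ Odd (catalan m) := by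
  rw [← ZMod.natCast_eq_one_iff_odd, natCast_catalan_succ_of_charTwo, if_pos (dvd_mul_right 2 m),
    Nat.mul_div_cancel_left m two_pos, ZMod.pow_card, ZMod.natCast_eq_one_iff_odd]

theorem two_mul_add_two_ne_mersenne (m h : ℕ) : 2 * m + 2 ≠ mersenne h := by
  cases h with
  | zero => simp
  | succ h => rw [mersenne_succ]; lia

theorem exists_two_mul_add_one_eq_mersenne_iff (m : ℕ) :
    (∃ h, 2 * m + 1 = mersenne h) ↔ ∃ h, m = mersenne h := by
  constructor
  · rintro ⟨_ | h, hm⟩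
    · simp at hm
    · exact ⟨h, by rw [mersenne_succ] at hm; lia⟩
  · rintro ⟨h, rfl⟩
    exact ⟨h + 1, (mersenne_succ h).symm⟩

/-- The Catalan number `C n` is odd iff `n = 2 ^ h - 1` for some `h`. -/
theorem catalan_odd_iff (n : ℕ) :
    Odd (catalan n) ↔ ∃ h : ℕ, n = 2 ^ h - 1 := by
  change Odd (catalan n) ↔ ∃ h, n = mersenne h
  induction n using Nat.evenOddStrongRec with
  | h_even n _ =>
    cases n with
    | zero => exact iff_of_true (by simp) ⟨0, by simp⟩
    | succ m =>
      exact iff_of_false (Nat.not_odd_iff_even.mpr (even_catalan_two_mul_add_two m))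
        fun ⟨h, hm⟩ ↦ two_mul_add_two_ne_mersenne m h hm
  | h_odd m ih =>
    rw [odd_catalan_two_mul_add_one_iff, ih m (by lia), exists_two_mul_add_one_eq_mersenne_iff]
end

section
/- For every integer d ≥ 1, the odd double factorials satisfy 2 · (2d−1)!! = ∑_{k=1}^{d} binomial(d+1, k) · (2k−3)!! · (2d−2k−1)!!, where each factor (2m−1)!! denotes the product (2m−1)(2m−3)···3·1 (with the empty product, for m ≤ 0, equal to 1). Equivalently, (2d)!! = (1/2) ∑_{k=1}^{d} binomial(d+1,k) (2k−2)!! (2d−2k)!! in the paper's notation (2d)!! = (2d−1)(2d−3)···3·1. -/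
/-!
Since `(2n - 1)‼ * 2 ^ n = (n + 1)! * catalan n`, the Segner recurrence
`catalan (n + 1) = ∑ catalan i * catalan j` over `i + j = n`, multiplied by `(n + 2)!`, becomes a
recurrence for odd double factorials. The binomial coefficient appears because
`(n + 2)! = (n + 2).choose (i + 1) * (i + 1)! * (j + 1)!`, and the powers of two on the two sides
differ by the single factor `2`. The identity follows on putting `k = i + 1`.
-/

section OddDoubleFactorial

open Nat Finset

theorem doubleFactorial_two_mul_sub_one_mul_doubleFactorial_two_mul (n : ℕ) :
    (2 * n - 1)‼ * (2 * n)‼ = (2 * n)! := by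
  cases n with
  | zero => rfl
  | succ n => exact (mul_comm _ _).trans (factorial_eq_mul_doubleFactorial (2 * n + 1)).symm

theorem doubleFactorial_two_mul_sub_one_mul_two_pow (n : ℕ) :
    (2 * n - 1)‼ * 2 ^ n = n.centralBinom * n ! := by
  apply Nat.eq_of_mul_eq_mul_right n.factorial_pos
  calc (2 * n - 1)‼ * 2 ^ n * n !
      = (2 * n)! := by
        rw [mul_assoc, ← doubleFactorial_two_mul,
          doubleFactorial_two_mul_sub_one_mul_doubleFactorial_two_mul]
    _ = n.centralBinom * n ! * n ! := by
        rw [two_mul, ← add_choose_mul_factorial_mul_factorial, ← two_mul,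
          centralBinom_eq_two_mul_choose]

theorem catalan_mul_factorial_succ (n : ℕ) :
    catalan n * (n + 1)! = (2 * n - 1)‼ * 2 ^ n := by
  rw [doubleFactorial_two_mul_sub_one_mul_two_pow, ← succ_mul_catalan_eq_centralBinom,
    factorial_succ]
  ring

theorem two_mul_doubleFactorial_two_mul_add_one (n : ℕ) :
    2 * (2 * n + 1)‼ = ∑ ij ∈ antidiagonal n,
      (n + 2).choose (ij.1 + 1) * (2 * ij.1 - 1)‼ * (2 * ij.2 - 1)‼ := by
  apply Nat.eq_of_mul_eq_mul_right (Nat.two_pow_pos n)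
  have catalan_succ_scaled : 2 * (2 * n + 1)‼ * 2 ^ n = catalan (n + 1) * (n + 2)! := by
    rw [catalan_mul_factorial_succ, pow_succ, show 2 * (n + 1) - 1 = 2 * n + 1 by lia]
    ring
  rw [catalan_succ_scaled, catalan_succ', sum_mul, sum_mul]
  refine sum_congr rfl fun ⟨i, j⟩ hij ↦ ?_
  obtain rfl : i + j = n := mem_antidiagonal.mp hij
  have factorial_split : (i + j + 2).choose (i + 1) * (i + 1)! * (j + 1)! = (i + j + 2)! := by
    rw [show i + j + 2 = (i + 1) + (j + 1) by ring, choose_symm_add,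
      add_choose_mul_factorial_mul_factorial]
  calc catalan i * catalan j * (i + j + 2)!
      = (i + j + 2).choose (i + 1) * (catalan i * (i + 1)!) * (catalan j * (j + 1)!) := by
        rw [← factorial_split]
        ring
    _ = (i + j + 2).choose (i + 1) * (2 * i - 1)‼ * (2 * j - 1)‼ * 2 ^ (i + j) := by
        rw [catalan_mul_factorial_succ, catalan_mul_factorial_succ, pow_add]
        ring

end OddDoubleFactorial

open Nat in
/-- For `d ≥ 1`:  `2 ⬝ (2d-1)!! = ∑_{k=1}^d C(d+1, k) (2k-3)!! (2d-2k-1)!!`,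
where `(2m-1)!!` is the product of the odd numbers `(2m-1)(2m-3)⋯3⋅1`
(equal to `1` for `m ≤ 0`, via truncated subtraction). -/
theorem doubleFactorial_identity (d : ℕ) (hd : 1 ≤ d) :
    2 * (2 * d - 1)‼ =
      ∑ k ∈ Finset.Icc 1 d, (d + 1).choose k * (2 * k - 3)‼ * (2 * d - 2 * k - 1)‼ := by
  obtain ⟨n, rfl⟩ := Nat.exists_eq_add_of_le' hd
  rw [show 2 * (n + 1) - 1 = 2 * n + 1 by lia, two_mul_doubleFactorial_two_mul_add_one,
    Finset.Nat.sum_antidiagonal_eq_sum_range_succ_mk, Finset.range_eq_Ico,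
    ← Finset.Ico_add_one_right_eq_Icc, ← Finset.sum_Ico_add' _ 0 (n + 1) 1]
  refine Finset.sum_congr rfl fun i _ ↦ ?_
  rw [show 2 * (i + 1) - 3 = 2 * i - 1 by lia,
    show 2 * (n + 1) - 2 * (i + 1) - 1 = 2 * (n - i) - 1 by lia]
end

section
/- The Motzkin number M_n is even if and only if there exists m ∈ C with n = 4m − 2 or n = 4m − 1. -/
/-!
By Lucas' theorem, `M n` has the same parity as the binomial transform
`S N = ∑ k, C(N, k) * Catalan k` of the Catalan numbers at `N = n / 2`, and the binomial transform
of any sequence modulo `2` at `2N` or `2N + 1` is expressed through the transforms at `N` of its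
even-indexed and odd-indexed parts. Reducing the equation `c = 1 + X c ^ 2` of the Catalan series
modulo `2` gives `c(X) = 1 + X c(X ^ 2)`: the even-indexed Catalan numbers reduce to `1, 0, 0, …`
and the odd-indexed ones to the Catalan numbers again. Hence `S (2N) = 1` and `S (2N + 1) = 1 + S N`
modulo `2`, which is the recursion defining the indicator of `C` at `N + 1`.
-/

/-- The Motzkin numbers `M n = ∑_k C(n, 2k) ⬝ Catalan k`. -/
def motzkin (n : ℕ) : ℕ := ∑ k ∈ Finset.range (n + 1), n.choose (2 * k) * catalan k

/-- The set `C = {1, 3, 4, 5, 7, 9, 11, 12, …}` of block lengths of the Thue–Morse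
sequence: a positive integer `m` belongs to `C` iff it is not the case that `m` is
even with `m / 2 ∈ C`;  `0 ∉ C`. -/
def inC (m : ℕ) : Bool :=
  if h : m = 0 then false
  else if m % 2 = 0 then !(inC (m / 2)) else true
decreasing_by exact Nat.div_lt_self (Nat.pos_of_ne_zero h) one_lt_two

open Finset PowerSeries

section BinomialTransform

variable {R : Type*} [Semiring R]

/-- The binomial transform of a sequence `f`, taken with all signs positive. -/
def binomialTransform (f : ℕ → R) (n : ℕ) : R :=
  ∑ k ∈ range (n + 1), n.choose k * f k

theorem binomialTransform_eq_sum_range (f : ℕ → R) {n K : ℕ} (hK : n < K) :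
    binomialTransform f n = ∑ k ∈ range K, n.choose k * f k := by
  refine sum_subset (range_mono hK) fun k _ hk ↦ ?_
  rw [Nat.choose_eq_zero_of_lt (by simpa using hk), Nat.cast_zero, zero_mul]

theorem binomialTransform_single_zero (a : R) (n : ℕ) :
    binomialTransform (Pi.single 0 a) n = a := by
  simp [binomialTransform, Pi.single_apply]

end BinomialTransform

theorem sum_range_mul {M : Type*} [AddCommMonoid M] (f : ℕ → M) (m n : ℕ) :
    ∑ i ∈ range (m * n), f i = ∑ k ∈ range n, ∑ j ∈ range m, f (m * k + j) := by
  induction n with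
  | zero => simp
  | succ n ih => rw [Nat.mul_succ, sum_range_add, ih, sum_range_succ]

section Lucas

variable {R : Type*} [Semiring R] (p : ℕ) [Fact p.Prime] [CharP R p]

theorem natCast_choose_mul_add (n k : ℕ) {r s : ℕ} (hr : r < p) (hs : s < p) :
    ((p * n + r).choose (p * k + s) : R) = r.choose s * n.choose k := by
  have lucas := CharP.natCast_eq_natCast' R p
    (Choose.choose_modEq_choose_mod_mul_choose_div_nat (n := p * n + r) (k := p * k + s) (p := p))
  have hp : 0 < p := r.zero_le.trans_lt hr
  simpa [Nat.mul_add_mod_of_lt, Nat.mul_add_div hp, Nat.div_eq_of_lt, Nat.mod_eq_of_lt, hr, hs]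
    using lucas

theorem sum_range_choose_mul_eq_binomialTransform (f : ℕ → R) (n : ℕ) :
    ∑ k ∈ range (n + 1), (n.choose (p * k) : R) * f k = binomialTransform f (n / p) := by
  rw [binomialTransform_eq_sum_range f (Nat.lt_succ_of_le (n.div_le_self p))]
  refine sum_congr rfl fun k _ ↦ ?_
  have hp : 0 < p := (Fact.out : p.Prime).pos
  have lucas := natCast_choose_mul_add (R := R) p (n / p) k (n.mod_lt hp) hp
  rw [Nat.div_add_mod, add_zero, Nat.choose_zero_right, Nat.cast_one, one_mul] at lucas
  rw [lucas]

theorem binomialTransform_mul_add (f : ℕ → R) (n : ℕ) {r : ℕ} (hr : r < p) :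
    binomialTransform f (p * n + r) =
      ∑ j ∈ range p, r.choose j * binomialTransform (fun k ↦ f (p * k + j)) n := by
  have hK : p * n + r < p * (n + 1) := by rw [Nat.mul_succ]; gcongr
  rw [binomialTransform_eq_sum_range f hK, sum_range_mul, sum_comm]
  simp only [binomialTransform, mul_sum]
  refine sum_congr rfl fun j hj ↦ sum_congr rfl fun k _ ↦ ?_
  rw [natCast_choose_mul_add p n k hr (mem_range.1 hj), mul_assoc]

end Lucas

theorem expand_card_eq_pow (p : ℕ) [Fact p.Prime] (f : (ZMod p)⟦X⟧) :
    expand p (NeZero.ne p) f = f ^ p := by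
  have h := MvPowerSeries.map_frobenius_expand p (NeZero.ne p) (f := f)
  rwa [ZMod.frobenius_zmod, MvPowerSeries.map_id] at h

theorem map_catalanSeries_eq_expand_two :
    map (Nat.castRingHom (ZMod 2)) catalanSeries =
      expand 2 two_ne_zero (map (Nat.castRingHom (ZMod 2)) catalanSeries) * X + 1 := by
  rw [expand_card_eq_pow]
  conv_lhs => rw [← catalanSeries_sq_mul_X_add_one]
  simp

theorem catalan_succ_zmod_two (n : ℕ) :
    (catalan (n + 1) : ZMod 2) = if 2 ∣ n then (catalan (n / 2) : ZMod 2) else 0 := by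
  simpa [coeff_succ_mul_X, coeff_expand, coeff_one] using
    congrArg (coeff (n + 1)) map_catalanSeries_eq_expand_two

theorem catalan_two_mul_add_one_zmod_two (n : ℕ) :
    (catalan (2 * n + 1) : ZMod 2) = catalan n := by
  simp [catalan_succ_zmod_two]

theorem catalan_two_mul_zmod_two (n : ℕ) :
    (catalan (2 * n) : ZMod 2) = (Pi.single 0 1 : ℕ → ZMod 2) n := by
  cases n with
  | zero => simp
  | succ n =>
    rw [Nat.mul_succ, catalan_succ_zmod_two, if_neg (by omega), Pi.single_eq_of_ne n.succ_ne_zero]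

theorem binomialTransform_catalan_two_mul (n : ℕ) :
    binomialTransform (fun k ↦ (catalan k : ZMod 2)) (2 * n) = 1 := by
  have h := binomialTransform_mul_add 2 (fun k ↦ (catalan k : ZMod 2)) n two_pos
  simpa [sum_range_succ, catalan_two_mul_zmod_two, binomialTransform_single_zero] using h

theorem binomialTransform_catalan_two_mul_add_one (n : ℕ) :
    binomialTransform (fun k ↦ (catalan k : ZMod 2)) (2 * n + 1) =
      1 + binomialTransform (fun k ↦ (catalan k : ZMod 2)) n := by
  have h := binomialTransform_mul_add 2 (fun k ↦ (catalan k : ZMod 2)) n one_lt_two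
  simpa [sum_range_succ, catalan_two_mul_zmod_two, catalan_two_mul_add_one_zmod_two,
    binomialTransform_single_zero] using h

theorem inC_zero : inC 0 = false := by
  simp [inC]

theorem inC_two_mul_add_one (m : ℕ) : inC (2 * m + 1) = true := by
  rw [inC]
  simp [Nat.add_mod]

theorem inC_two_mul {m : ℕ} (hm : m ≠ 0) : inC (2 * m) = !inC m := by
  rw [inC]
  simp [hm]

theorem inC_eq_false_iff {n : ℕ} (hn : n ≠ 0) : inC n = false ↔ ∃ m, inC m ∧ n = 2 * m := by
  obtain ⟨m, rfl | rfl⟩ := n.even_or_odd'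
  · simp [inC_two_mul (m := m) (by omega)]
  · simp only [inC_two_mul_add_one, Bool.true_eq_false, false_iff]
    omega

theorem binomialTransform_catalan_eq_toNat_inC (n : ℕ) :
    binomialTransform (fun k ↦ (catalan k : ZMod 2)) n = (inC (n + 1)).toNat := by
  induction n using Nat.evenOddRec with
  | h0 => simp [inC_two_mul_add_one 0, binomialTransform]
  | h_even n _ => simp [binomialTransform_catalan_two_mul, inC_two_mul_add_one]
  | h_odd n ih =>
    rw [binomialTransform_catalan_two_mul_add_one, ih, add_assoc, ← Nat.mul_succ,
      inC_two_mul n.succ_ne_zero]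
    cases inC (n + 1) <;> decide

theorem motzkin_zmod_two (n : ℕ) :
    (motzkin n : ZMod 2) = binomialTransform (fun k ↦ (catalan k : ZMod 2)) (n / 2) := by
  rw [← sum_range_choose_mul_eq_binomialTransform, motzkin]
  push_cast
  rfl

theorem even_motzkin_iff_inC_eq_false (n : ℕ) : Even (motzkin n) ↔ inC (n / 2 + 1) = false := by
  rw [← ZMod.natCast_eq_zero_iff_even, motzkin_zmod_two, binomialTransform_catalan_eq_toNat_inC]
  cases inC (n / 2 + 1) <;> simp

/-- The Motzkin number `M n` is even iff `n = 4m - 2` or `n = 4m - 1` for some `m ∈ C`. -/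
theorem motzkin_even_iff (n : ℕ) :
    Even (motzkin n) ↔ ∃ m : ℕ, inC m ∧ (n = 4 * m - 2 ∨ n = 4 * m - 1) := by
  rw [even_motzkin_iff_inC_eq_false, inC_eq_false_iff (n / 2).succ_ne_zero]
  refine exists_congr fun m ↦ and_congr_right fun hm ↦ ?_
  have hm_ne : m ≠ 0 := by
    rintro rfl
    simp [inC_zero] at hm
  omega
end

section
/- For every natural number n, the central binomial coefficient satisfies: binomial(2n, n) ≡ (−1)^{δ_3(n)} (mod 3) if n ∈ T(01), and binomial(2n, n) ≡ 0 (mod 3) otherwise. -/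
/-- `T(01)`: the natural numbers all of whose base-3 digits are `0` or `1`. -/
def T01 : Set ℕ := {n | ∀ d ∈ Nat.digits 3 n, d = 0 ∨ d = 1}

/-- `δ_3 n`: the number of base-3 digits of `n` equal to `1`. -/
def delta3 (n : ℕ) : ℕ := (Nat.digits 3 n).count 1

/-!
If every base-`p` digit `d` of `n` satisfies `2 * d < p`, then doubling `n` produces no carry and
Lucas's theorem gives the product of the `centralBinom d` modulo `p`. Otherwise the lowest digit `d`
with `p ≤ 2 * d` contributes the factor `(2 * d - p).choose d = 0`, and `p` also divides
`centralBinom d`, so the same product formula holds. For `p = 3` the factors are `1`, `2 ≡ -1` and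
`6 ≡ 0`.
-/

section Prime

variable {p : ℕ} [hp : Fact p.Prime]

lemma prime_dvd_centralBinom_of_lt_of_le {d : ℕ} (hlt : d < p) (hle : p ≤ 2 * d) :
    p ∣ d.centralBinom :=
  hp.out.dvd_choose hlt (by omega) hle

lemma centralBinom_modEq_centralBinom_mod_mul_centralBinom_div (n : ℕ) :
    n.centralBinom ≡ (n % p).centralBinom * (n / p).centralBinom [MOD p] := by
  have lucas : n.centralBinom ≡
      (2 * n % p).choose (n % p) * (2 * n / p).choose (n / p) [MOD p] :=
    Choose.choose_modEq_choose_mod_mul_choose_div_nat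
  have digit_lt : n % p < p := Nat.mod_lt n hp.out.pos
  have two_mul_eq : 2 * n = 2 * (n % p) + p * (2 * (n / p)) := by
    linarith [Nat.mod_add_div n p]
  rcases lt_or_ge (2 * (n % p)) p with no_carry | carry
  · have mod_eq : 2 * n % p = 2 * (n % p) := by
      rw [two_mul_eq, Nat.add_mul_mod_self_left, Nat.mod_eq_of_lt no_carry]
    have div_eq : 2 * n / p = 2 * (n / p) := by
      rw [two_mul_eq, Nat.add_mul_div_left _ _ hp.out.pos, Nat.div_eq_of_lt no_carry, zero_add]
    rwa [mod_eq, div_eq] at lucas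
  · have mod_eq : 2 * n % p = 2 * (n % p) - p := by
      rw [two_mul_eq, Nat.add_mul_mod_self_left, Nat.mod_eq_sub_mod carry,
        Nat.mod_eq_of_lt (by omega)]
    rw [mod_eq, Nat.choose_eq_zero_of_lt (by omega), zero_mul] at lucas
    have dvd_digit := prime_dvd_centralBinom_of_lt_of_le digit_lt carry
    exact lucas.trans (Nat.modEq_zero_iff_dvd.mpr (dvd_digit.mul_right _)).symm

lemma centralBinom_modEq_prod_digits (n : ℕ) :
    n.centralBinom ≡ ((p.digits n).map Nat.centralBinom).prod [MOD p] := by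
  induction n using Nat.strong_induction_on with
  | _ n ih =>
    rcases n.eq_zero_or_pos with rfl | n_pos
    · simp [Nat.ModEq.refl]
    · rw [Nat.digits_def' hp.out.one_lt n_pos, List.map_cons, List.prod_cons]
      exact (centralBinom_modEq_centralBinom_mod_mul_centralBinom_div n).trans
        ((ih _ (Nat.div_lt_self n_pos hp.out.one_lt)).mul_left _)

lemma prime_dvd_centralBinom_of_mem_digits {n d : ℕ} (hd : d ∈ p.digits n) (hle : p ≤ 2 * d) :
    p ∣ n.centralBinom := by
  have dvd_digit : p ∣ d.centralBinom :=
    prime_dvd_centralBinom_of_lt_of_le (Nat.digits_lt_base hp.out.one_lt hd) hle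
  have dvd_prod : p ∣ ((p.digits n).map Nat.centralBinom).prod :=
    dvd_digit.trans (List.dvd_prod (List.mem_map_of_mem hd))
  exact ((centralBinom_modEq_prod_digits n).dvd_iff dvd_rfl).mpr dvd_prod

lemma centralBinom_modEq_two_pow_count_one {n : ℕ} (hn : ∀ d ∈ p.digits n, d = 0 ∨ d = 1) :
    n.centralBinom ≡ 2 ^ (p.digits n).count 1 [MOD p] := by
  have prod_eq : ((p.digits n).map Nat.centralBinom).prod =
      Nat.centralBinom 1 ^ (p.digits n).count 1 :=
    List.prod_map_eq_pow_single 1 Nat.centralBinom fun d d_ne_one hd => by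
      rw [(hn d hd).resolve_right d_ne_one, Nat.centralBinom_zero]
  exact prod_eq ▸ centralBinom_modEq_prod_digits n

end Prime

/-- Central binomial coefficients mod 3: `C(2n, n) ≡ (-1)^{δ_3(n)} (mod 3)` if all
base-3 digits of `n` are `0` or `1`, and `C(2n, n) ≡ 0 (mod 3)` otherwise. -/
theorem centralBinom_mod_three (n : ℕ) :
    (n ∈ T01 → ((2 * n).choose n : ℤ) ≡ (-1) ^ delta3 n [ZMOD 3]) ∧
    (n ∉ T01 → ((2 * n).choose n : ℤ) ≡ 0 [ZMOD 3]) := by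
  rw [← Nat.centralBinom_eq_two_mul_choose]
  constructor
  · intro hn
    have two_pow : (n.centralBinom : ℤ) ≡ 2 ^ delta3 n [ZMOD 3] := by
      exact_mod_cast Int.natCast_modEq_iff.mpr (centralBinom_modEq_two_pow_count_one (p := 3) hn)
    have two_modEq : (2 : ℤ) ≡ -1 [ZMOD 3] := by decide
    exact two_pow.trans (two_modEq.pow _)
  · intro hn
    obtain ⟨d, hd, d_ne_zero, d_ne_one⟩ : ∃ d ∈ Nat.digits 3 n, d ≠ 0 ∧ d ≠ 1 := by
      simpa [T01] using hn
    have three_dvd : 3 ∣ n.centralBinom := prime_dvd_centralBinom_of_mem_digits hd (by omega)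
    exact Int.modEq_zero_iff_dvd.mpr (Int.natCast_dvd_natCast.mpr three_dvd)
end

section
/- For every natural number n, the central trinomial coefficient satisfies: T_n ≡ 1 (mod 3) if n ∈ T(01), and T_n ≡ 0 (mod 3) otherwise. -/
open Polynomial in
/-- The central trinomial coefficient: the coefficient of `x^n` in `(1 + x + x^2)^n`. -/
noncomputable def centralTrinomial (n : ℕ) : ℤ :=
  (((1 : ℤ[X]) + X + X ^ 2) ^ n).coeff n

/-!
Modulo a prime `p`, the Frobenius identity `f ^ p = f(x ^ p)` splits `f ^ (r + p * m)` as
`f ^ r * (f ^ m)(x ^ p)`. If `deg f ≤ 2` and `r < p`, then `deg (f ^ r) ≤ 2 * r < p + r`, so the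
coefficient of `x ^ (r + p * m)` receives the single contribution `[x ^ r] f ^ r * [x ^ m] f ^ m`.
Iterating yields the Lucas congruence `T_n ≡ ∏ T_d (mod p)` over the base-`p` digits `d` of `n`.
For `p = 3` the factors are `T_0 = T_1 = 1` and `T_2 = 3`.
-/

section Lucas

open Polynomial

theorem coeff_mul_expand {R : Type*} [CommSemiring R] {p r : ℕ} (f g : R[X]) (m : ℕ)
    (hr : r < p) (hf : f.natDegree < p + r) :
    (f * expand R p g).coeff (r + p * m) = f.coeff r * g.coeff m := by
  have hp : 0 < p := Nat.zero_lt_of_lt hr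
  rw [coeff_mul, Finset.sum_eq_single_of_mem (r, p * m) (by simp), coeff_expand_mul' hp]
  rintro ⟨i, j⟩ hij hne
  replace hij : i + j = r + p * m := Finset.HasAntidiagonal.mem_antidiagonal.1 hij
  by_cases hj : p ∣ j
  · obtain ⟨k, rfl⟩ := hj
    have hi : f.natDegree < i := by
      obtain hk | rfl | hk := lt_trichotomy k m
      · have : p * k + p ≤ p * m := Nat.mul_le_mul_left p hk
        lia
      · exact (hne (by rw [Nat.add_right_cancel hij])).elim
      · have : p * m + p ≤ p * k := Nat.mul_le_mul_left p hk
        lia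
    rw [coeff_eq_zero_of_natDegree_lt hi, zero_mul]
  · rw [coeff_expand hp, if_neg hj, mul_zero]

variable {p : ℕ} [Fact p.Prime]

theorem coeff_pow_self_add_mul {f : (ZMod p)[X]} (hf : f.natDegree ≤ 2) {r : ℕ} (hr : r < p)
    (m : ℕ) :
    (f ^ (r + p * m)).coeff (r + p * m) = (f ^ r).coeff r * (f ^ m).coeff m := by
  have hdeg : (f ^ r).natDegree < p + r := by
    have := natDegree_pow_le_of_le r hf
    lia
  rw [← coeff_mul_expand _ _ m hr hdeg, ZMod.expand_card, ← pow_mul', pow_add]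

theorem coeff_pow_self_eq_prod_digits {f : (ZMod p)[X]} (hf : f.natDegree ≤ 2) (n : ℕ) :
    (f ^ n).coeff n = ((Nat.digits p n).map fun d ↦ (f ^ d).coeff d).prod := by
  have hp : 1 < p := Fact.out (p := p.Prime).one_lt
  induction n using Nat.strong_induction_on with
  | _ n ih =>
    obtain rfl | hn := n.eq_zero_or_pos
    · simp
    · rw [Nat.digits_def' hp hn, List.map_cons, List.prod_cons, ← ih _ (Nat.div_lt_self hn hp),
        ← coeff_pow_self_add_mul hf (Nat.mod_lt n (Nat.zero_lt_of_lt hp)), Nat.mod_add_div]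

theorem intCast_centralTrinomial (R : Type*) [Ring R] (n : ℕ) :
    (centralTrinomial n : R) = (((1 : R[X]) + X + X ^ 2) ^ n).coeff n := by
  rw [centralTrinomial, ← eq_intCast (Int.castRingHom R), ← coeff_map]
  simp only [Polynomial.map_pow, Polynomial.map_add, Polynomial.map_one, map_X]

variable (p) in
theorem centralTrinomial_modEq_prod_digits (n : ℕ) :
    centralTrinomial n ≡ ((Nat.digits p n).map centralTrinomial).prod [ZMOD p] := by
  have hdeg : ((1 : (ZMod p)[X]) + X + X ^ 2).natDegree ≤ 2 := by compute_degree
  rw [← ZMod.intCast_eq_intCast_iff, Int.cast_list_prod, List.map_map, intCast_centralTrinomial,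
    coeff_pow_self_eq_prod_digits hdeg]
  simp only [Function.comp_def, intCast_centralTrinomial]

end Lucas

theorem centralTrinomial_zero : centralTrinomial 0 = 1 := by
  simp [centralTrinomial]

theorem centralTrinomial_one : centralTrinomial 1 = 1 := by
  simp [centralTrinomial, Polynomial.coeff_one, Polynomial.coeff_X_pow]

open Polynomial in
theorem centralTrinomial_two : centralTrinomial 2 = 3 := by
  have expansion : ((1 : ℤ[X]) + X + X ^ 2) ^ 2 =
      1 + C 2 * X + C 3 * X ^ 2 + C 2 * X ^ 3 + X ^ 4 := by
    simp only [map_ofNat]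
    ring
  simp [centralTrinomial, expansion, coeff_one, coeff_X, coeff_X_pow]

/-- Central trinomial coefficients mod 3: `T_n ≡ 1 (mod 3)` if all base-3 digits of
`n` are `0` or `1`, and `T_n ≡ 0 (mod 3)` otherwise. -/
theorem centralTrinomial_mod_three (n : ℕ) :
    (n ∈ T01 → centralTrinomial n ≡ 1 [ZMOD 3]) ∧
    (n ∉ T01 → centralTrinomial n ≡ 0 [ZMOD 3]) := by
  have lucas := centralTrinomial_modEq_prod_digits 3 n
  constructor <;> intro hn
  · have prod_eq_one : ((Nat.digits 3 n).map centralTrinomial).prod = 1 := by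
      refine List.prod_eq_one (List.forall_mem_map.2 fun d hd ↦ ?_)
      obtain rfl | rfl := hn d hd
      exacts [centralTrinomial_zero, centralTrinomial_one]
    rwa [prod_eq_one] at lucas
  · obtain ⟨d, hd, hd0, hd1⟩ : ∃ d ∈ Nat.digits 3 n, d ≠ 0 ∧ d ≠ 1 := by
      simpa [T01] using hn
    have hd_lt : d < 3 := Nat.digits_lt_base (by norm_num) hd
    obtain rfl : d = 2 := by lia
    have three_dvd : (3 : ℤ) ∣ ((Nat.digits 3 n).map centralTrinomial).prod :=
      centralTrinomial_two ▸ List.dvd_prod (List.mem_map_of_mem hd)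
    exact lucas.trans (Int.modEq_zero_iff_dvd.2 three_dvd)
end

section
/- For every natural number n, the Motzkin number satisfies: M_n ≡ −1 (mod 3) if n = 3m − 1 for some m ∈ T(01); M_n ≡ 1 (mod 3) if n = 3m or n = 3m − 2 for some m ∈ T(01); and M_n ≡ 0 (mod 3) otherwise. -/
/-!
Summing the binomial coefficients, the generating functions `M` and `C` of the Motzkin and Catalan
numbers satisfy `M = (1 - X)⁻¹ C(X² (1 - X)⁻²)`. Hence `C = 1 + X C²` makes `M` a root of a
quadratic with discriminant `(1 + X)(1 - 3X)`, which modulo 3 is just `1 + X`. Stripping the last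
base-3 digit shows that the generating function `T` of `T(01)` satisfies `T(X) = (1 + X) T(X³)`.
Modulo 3 we have `T(X³) = T(X)³`, so `(1 + X) T² = 1` and `(1 + X) T` is a square root of the
discriminant. The quadratic formula then gives
`X² M = (1 + X) T - 1 + X = (1 - X + X²) T(X³) - 1 + X`, whose coefficients are the
claimed residues.
-/

open PowerSeries

section BinomialTransform

variable {R : Type*} [CommRing R]

lemma coeff_mul_subst {a : R⟦X⟧} (ha : constantCoeff a = 0) (f g : R⟦X⟧) (n : ℕ) :
    coeff n (g * f.subst a) = ∑ d ∈ Finset.range (n + 1), coeff d f * coeff n (g * a ^ d) := by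
  have coeff_pow_of_lt {j d : ℕ} (hjd : j < d) : coeff j (a ^ d) = 0 :=
    X_pow_dvd_iff.1 (pow_dvd_pow_of_dvd (X_dvd_iff.2 ha) d) j hjd
  have coeff_subst_of_le {j : ℕ} (hj : j ≤ n) :
      coeff j (f.subst a) = ∑ d ∈ Finset.range (n + 1), coeff d f * coeff j (a ^ d) := by
    rw [coeff_subst' (HasSubst.of_constantCoeff_zero' ha)]
    refine finsum_eq_sum_of_support_subset _ fun d hd ↦ ?_
    contrapose! hd
    have hjd : j < d := by
      simp only [Finset.coe_range, Set.mem_Iio, not_lt] at hd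
      omega
    simp [coeff_pow_of_lt hjd]
  simp_rw [coeff_mul, Finset.mul_sum]
  rw [Finset.sum_comm]
  refine Finset.sum_congr rfl fun p hp ↦ ?_
  rw [coeff_subst_of_le (Finset.HasAntidiagonal.antidiagonal.snd_le hp), Finset.mul_sum]
  exact Finset.sum_congr rfl fun d _ ↦ mul_left_comm _ _ _

lemma coeff_mk_one_mul_X_mul_mk_one_pow (n d : ℕ) :
    coeff n (mk 1 * (X * mk 1) ^ d : R⟦X⟧) = n.choose d := by
  have hregroup : (mk 1 * (X * mk 1) ^ d : R⟦X⟧) = X ^ d * mk 1 ^ (d + 1) := by ring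
  rw [hregroup, mk_one_pow_eq_mk_choose_add, coeff_X_pow_mul']
  split_ifs with h
  · simp [Nat.add_sub_cancel' h]
  · simp [Nat.choose_eq_zero_of_lt (not_le.1 h)]

lemma mk_sum_choose_mul {r : ℕ} (hr : r ≠ 0) (a : ℕ → R) :
    mk (fun n ↦ ∑ k ∈ Finset.range (n + 1), (n.choose (r * k) : R) * a k) =
      mk 1 * (mk a).subst ((X * mk 1 : R⟦X⟧) ^ r) := by
  ext n
  rw [coeff_mul_subst (by simp [hr])]
  simp_rw [← pow_mul, coeff_mk_one_mul_X_mul_mk_one_pow, coeff_mk, mul_comm]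

end BinomialTransform

/-- The generating function `∑ M_n X ^ n` of the Motzkin numbers, with coefficients in `R`. -/
def motzkinSeries (R : Type*) [Semiring R] : R⟦X⟧ := mk fun n ↦ (motzkin n : R)

section MotzkinSeries

variable (R : Type*) [CommRing R]

lemma motzkinSeries_eq_mul_subst :
    motzkinSeries R =
      mk 1 * (catalanSeries.map (Nat.castRingHom R)).subst ((X * mk 1 : R⟦X⟧) ^ 2) := by
  have hmap : catalanSeries.map (Nat.castRingHom R) = mk fun n ↦ (catalan n : R) := by
    ext n; simp
  rw [hmap, ← mk_sum_choose_mul two_ne_zero]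
  ext n
  simp [motzkinSeries, motzkin]

lemma one_sub_X_mul_motzkinSeries :
    (1 - X) * motzkinSeries R = 1 + X ^ 2 * motzkinSeries R ^ 2 := by
  have hsubst : HasSubst ((X * mk 1 : R⟦X⟧) ^ 2) := .of_constantCoeff_zero' (by simp)
  have hcatalan := congrArg (fun f ↦ substAlgHom (R := R) hsubst (f.map (Nat.castRingHom R)))
    catalanSeries_sq_mul_X_add_one
  simp only [map_add, map_mul, map_pow, map_one, map_X, substAlgHom_X, coe_substAlgHom]
    at hcatalan
  have hgeom : (mk 1 : R⟦X⟧) * (1 - X) = 1 := mk_one_mul_one_sub_eq_one R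
  rw [motzkinSeries_eq_mul_subst]
  set F := (catalanSeries.map (Nat.castRingHom R)).subst ((X * mk 1 : R⟦X⟧) ^ 2)
  linear_combination F * hgeom - hcatalan

lemma one_sub_X_sub_motzkinSeries_sq :
    (1 - X - 2 * X ^ 2 * motzkinSeries R) ^ 2 = (1 + X) * (1 - 3 * X) := by
  linear_combination (-4 * X ^ 2) * one_sub_X_mul_motzkinSeries R

end MotzkinSeries

lemma mem_T01_iff {n : ℕ} : n ∈ T01 ↔ (n % 3 = 0 ∨ n % 3 = 1) ∧ n / 3 ∈ T01 := by
  obtain rfl | hn := n.eq_zero_or_pos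
  · simp [T01]
  · simp [T01, Nat.digits_def' (by norm_num : 1 < 3) hn]

lemma T01_eq_union : T01 = (3 * ·) '' T01 ∪ Nat.succ '' ((3 * ·) '' T01) := by
  ext n
  rw [mem_T01_iff, Set.image_image]
  constructor
  · rintro ⟨h | h, hn⟩
    · exact .inl ⟨n / 3, hn, by dsimp only; omega⟩
    · exact .inr ⟨n / 3, hn, by dsimp only; omega⟩
  · rintro (⟨m, hm, rfl⟩ | ⟨m, hm, rfl⟩)
    · simpa using hm
    · dsimp only
      refine ⟨.inr (by omega), ?_⟩
      rwa [show (3 * m).succ / 3 = m by omega]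

lemma dvd_of_mem_image_mul {p n : ℕ} {s : Set ℕ} (h : n ∈ (p * ·) '' s) : p ∣ n := by
  obtain ⟨m, -, rfl⟩ := h
  exact dvd_mul_right p m

section IndicatorSeries

variable (R : Type*) [Semiring R]

/-- The generating function `∑_{n ∈ s} X ^ n` of a set `s` of natural numbers, with coefficients
in `R`. -/
noncomputable def indicatorSeries (s : Set ℕ) : R⟦X⟧ := mk (s.indicator 1)

lemma coeff_indicatorSeries (s : Set ℕ) (n : ℕ) :
    coeff n (indicatorSeries R s) = s.indicator 1 n :=
  coeff_mk n _

lemma indicatorSeries_union {s t : Set ℕ} (h : Disjoint s t) :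
    indicatorSeries R (s ∪ t) = indicatorSeries R s + indicatorSeries R t := by
  ext n
  simp [coeff_indicatorSeries, Set.indicator_union_of_disjoint h]

lemma X_mul_indicatorSeries (s : Set ℕ) :
    X * indicatorSeries R s = indicatorSeries R (Nat.succ '' s) := by
  classical
  ext n
  cases n <;> simp [coeff_indicatorSeries, Set.indicator_apply, coeff_succ_X_mul]

lemma constantCoeff_indicatorSeries_T01 :
    constantCoeff (indicatorSeries R T01) = 1 := by
  simp [indicatorSeries, T01]

end IndicatorSeries

section Expand

variable (R : Type*) [CommRing R]

lemma expand_indicatorSeries (s : Set ℕ) {p : ℕ} (hp : p ≠ 0) :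
    (indicatorSeries R s).expand p hp = indicatorSeries R ((p * ·) '' s) := by
  ext n
  rw [coeff_expand]
  split_ifs with h
  · obtain ⟨m, rfl⟩ := h
    rw [coeff_indicatorSeries, coeff_indicatorSeries, Nat.mul_div_cancel_left m hp.pos]
    exact (Set.indicator_image (f := (1 : ℕ → R)) (mul_right_injective₀ hp)).symm
  · rw [coeff_indicatorSeries, Set.indicator_of_notMem (mt dvd_of_mem_image_mul h)]

lemma indicatorSeries_T01 :
    indicatorSeries R T01 = (1 + X) * (indicatorSeries R T01).expand 3 three_ne_zero := by
  have hdisj : Disjoint ((3 * ·) '' T01) (Nat.succ '' ((3 * ·) '' T01)) := by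
    rw [Set.disjoint_left]
    rintro _ ⟨m, -, rfl⟩ ⟨_, ⟨k, -, rfl⟩, h⟩
    dsimp only at h
    omega
  rw [expand_indicatorSeries, add_mul, one_mul, X_mul_indicatorSeries,
    ← indicatorSeries_union R hdisj, ← T01_eq_union]

end Expand

lemma natCast_eq_zero_of_charP (R : Type*) [Semiring R] (p : ℕ) [CharP R p] :
    (p : R⟦X⟧) = 0 := by
  rw [← map_natCast (C (R := R)), CharP.cast_eq_zero, map_zero]

lemma expand_eq_pow_of_zmod (p : ℕ) [hp : Fact p.Prime] (f : (ZMod p)⟦X⟧) :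
    f.expand p hp.out.ne_zero = f ^ p := by
  have h := MvPowerSeries.map_frobenius_expand p hp.out.ne_zero (f := f)
  rwa [ZMod.frobenius_zmod, MvPowerSeries.map_id] at h

lemma one_add_X_mul_indicatorSeries_T01_sq :
    (1 + X) * indicatorSeries (ZMod 3) T01 ^ 2 = 1 := by
  have hT : indicatorSeries (ZMod 3) T01 ≠ 0 := by
    intro h
    simpa [h] using constantCoeff_indicatorSeries_T01 (ZMod 3)
  have hrec := indicatorSeries_T01 (ZMod 3)
  rw [expand_eq_pow_of_zmod] at hrec
  exact mul_left_cancel₀ hT (by linear_combination -hrec)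

lemma one_sub_X_sub_motzkinSeries_eq :
    1 - X - 2 * X ^ 2 * motzkinSeries (ZMod 3) = (1 + X) * indicatorSeries (ZMod 3) T01 := by
  have hsq : (1 - X - 2 * X ^ 2 * motzkinSeries (ZMod 3)) ^ 2 =
      ((1 + X) * indicatorSeries (ZMod 3) T01) ^ 2 := by
    linear_combination one_sub_X_sub_motzkinSeries_sq (ZMod 3) -
      (1 + X) * one_add_X_mul_indicatorSeries_T01_sq -
      (X + X ^ 2) * natCast_eq_zero_of_charP (ZMod 3) 3
  refine (sq_eq_sq_iff_eq_or_eq_neg.1 hsq).resolve_right fun hneg ↦ ?_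
  have hconst : (1 : ZMod 3) = -1 := by
    simpa [constantCoeff_indicatorSeries_T01] using congrArg constantCoeff hneg
  exact absurd hconst (by decide)

lemma X_sq_mul_motzkinSeries :
    X ^ 2 * motzkinSeries (ZMod 3) =
      (1 - X + X ^ 2) * indicatorSeries (ZMod 3) ((3 * ·) '' T01) - 1 + X := by
  have hrec := indicatorSeries_T01 (ZMod 3)
  rw [expand_indicatorSeries] at hrec
  linear_combination one_sub_X_sub_motzkinSeries_eq + (1 + X) * hrec +
    (X ^ 2 * motzkinSeries (ZMod 3) + X * indicatorSeries (ZMod 3) ((3 * ·) '' T01)) *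
      natCast_eq_zero_of_charP (ZMod 3) 3

lemma motzkin_cast_zmod_three (n : ℕ) :
    (motzkin n : ZMod 3) = ((3 * ·) '' T01).indicator 1 (n + 2) -
      ((3 * ·) '' T01).indicator 1 (n + 1) + ((3 * ·) '' T01).indicator 1 n := by
  have h := congrArg (coeff (n + 2)) X_sq_mul_motzkinSeries
  rw [add_mul, sub_mul, one_mul] at h
  simpa [coeff_X_pow_mul, coeff_succ_X_mul, coeff_one, coeff_X, motzkinSeries,
    coeff_indicatorSeries] using h

/-- Motzkin numbers mod 3: `M n ≡ -1` if `n = 3m - 1` with `m ∈ T(01)`;  `M n ≡ 1`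
if `n = 3m` or `n = 3m - 2` with `m ∈ T(01)`;  `M n ≡ 0` otherwise. -/
theorem motzkin_mod_three (n : ℕ) :
    ((∃ m ∈ T01, n + 1 = 3 * m) → (motzkin n : ℤ) ≡ -1 [ZMOD 3]) ∧
    ((∃ m ∈ T01, n = 3 * m ∨ n + 2 = 3 * m) → (motzkin n : ℤ) ≡ 1 [ZMOD 3]) ∧
    (¬ (∃ m ∈ T01, n + 1 = 3 * m ∨ n = 3 * m ∨ n + 2 = 3 * m) →
      (motzkin n : ℤ) ≡ 0 [ZMOD 3]) := by
  have mem_iff (k : ℕ) : k ∈ (3 * ·) '' T01 ↔ ∃ m ∈ T01, k = 3 * m := by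
    simp only [Set.mem_image, eq_comm]
  have modEq_iff (a b : ℤ) : a ≡ b [ZMOD 3] ↔ (a : ZMod 3) = b :=
    (ZMod.intCast_eq_intCast_iff a b 3).symm
  have notMem {k : ℕ} (hk : ¬ 3 ∣ k) : k ∉ (3 * ·) '' T01 := mt dvd_of_mem_image_mul hk
  simp only [and_or_left, exists_or, ← mem_iff, modEq_iff]
  push_cast
  rw [motzkin_cast_zmod_three]
  refine ⟨fun h ↦ ?_, ?_, fun h ↦ ?_⟩
  · have hdvd := dvd_of_mem_image_mul h
    simp [h, notMem (k := n) (by omega), notMem (k := n + 2) (by omega)]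
  · rintro (h | h)
    · have hdvd := dvd_of_mem_image_mul h
      simp [h, notMem (k := n + 1) (by omega), notMem (k := n + 2) (by omega)]
    · have hdvd := dvd_of_mem_image_mul h
      simp [h, notMem (k := n) (by omega), notMem (k := n + 1) (by omega)]
  · simp only [not_or] at h
    simp [h]
end

section
/- For every natural number n, the Motzkin prefix number satisfies: P_n ≡ 1 (mod 3) if n = 3m for some m ∈ T(01); P_n ≡ −1 (mod 3) if n = 3m + 1 or n = 3m − 1 for some m ∈ T(01); and P_n ≡ 0 (mod 3) otherwise. -/
/-- `motzkinPrefix n` is the number of sequences `(s 0, …, s (n-1))` with entries in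
`{-1, 0, 1}` (encoded as `Fin 3`, via `i ↦ (i : ℤ) - 1`) all of whose partial sums
are nonnegative, i.e. the number of Motzkin prefixes of length `n`. -/
def motzkinPrefix (n : ℕ) : ℕ :=
  ((Finset.univ : Finset (Fin n → Fin 3)).filter fun s =>
    ∀ j : Fin n, 0 ≤ ∑ i ∈ Finset.univ.filter (· ≤ j), ((s i : ℤ) - 1)).card

/-!
By the reflection principle, the Motzkin prefixes of length `n` are counted by the sum of the
coefficients of `x⁰` and `x¹` in `(x⁻¹ + 1 + x)ⁿ`. Writing `tₙ` for the first of these, the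
symmetry `x ↔ x⁻¹` shows that the recurrence for `tₙ₊₁` reads `tₙ₊₁ = tₙ + 2 [x¹](x⁻¹ + 1 + x)ⁿ`,
whence `2 Pₙ = tₙ + tₙ₊₁`. Modulo `3` the Frobenius identity
`(x⁻¹ + 1 + x)³ = x⁻³ + 1 + x³` gives `t₃ₘ = t₃ₘ₊₁ = tₘ` and `t₃ₘ₊₂ = 0`, so that `tₙ` is the
indicator function of `T(01)` and `Pₙ = -(tₙ + tₙ₊₁)`.
-/

open Finset LaurentPolynomial

/-- The number of Motzkin paths of length `n` that start at height `k` and never go below the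
horizontal axis. The starting height is an integer and is itself required to be nonnegative, so
that the number vanishes for `k = -1`. -/
def motzkinPrefixFrom (n : ℕ) (k : ℤ) : ℕ :=
  #{s : Fin n → Fin 3 | 0 ≤ k ∧ ∀ j : Fin n, 0 ≤ k + ∑ i with i ≤ j, ((s i : ℤ) - 1)}

theorem motzkinPrefixFrom_zero_right (n : ℕ) : motzkinPrefixFrom n 0 = motzkinPrefix n := by
  simp [motzkinPrefixFrom, motzkinPrefix]

theorem motzkinPrefixFrom_zero_left (k : ℤ) :
    motzkinPrefixFrom 0 k = if 0 ≤ k then 1 else 0 := by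
  simp [motzkinPrefixFrom, apply_ite card]

theorem motzkinPrefixFrom_of_neg (n : ℕ) {k : ℤ} (hk : k < 0) : motzkinPrefixFrom n k = 0 := by
  simp [motzkinPrefixFrom, hk.not_ge]

theorem forall_nonneg_partialSum_cons {n : ℕ} (k : ℤ) (c : Fin 3) (s : Fin n → Fin 3) :
    (∀ j : Fin (n + 1),
        0 ≤ k + ∑ i with i ≤ j, (((Fin.cons c s : Fin (n + 1) → Fin 3) i : ℤ) - 1)) ↔
      0 ≤ k + (c - 1) ∧ ∀ j : Fin n, 0 ≤ k + (c - 1) + ∑ i with i ≤ j, ((s i : ℤ) - 1) := by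
  rw [Fin.forall_fin_succ]
  simp only [sum_filter, Fin.sum_univ_succ, Fin.cons_zero, Fin.cons_succ, Fin.succ_le_succ_iff,
    Fin.zero_le, if_true, add_assoc]
  simp [Fin.succ_ne_zero, -sum_sub_distrib]

theorem motzkinPrefixFrom_succ (n : ℕ) {k : ℤ} (hk : 0 ≤ k) :
    motzkinPrefixFrom (n + 1) k =
      motzkinPrefixFrom n (k - 1) + motzkinPrefixFrom n k + motzkinPrefixFrom n (k + 1) := by
  have h_first_step : motzkinPrefixFrom (n + 1) k =
      ∑ c : Fin 3, motzkinPrefixFrom n (k + (c - 1)) := by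
    simp only [motzkinPrefixFrom, card_filter]
    rw [← (Fin.consEquiv fun _ : Fin (n + 1) ↦ Fin 3).sum_comp, Fintype.sum_prod_type]
    simp only [Fin.consEquiv_apply, forall_nonneg_partialSum_cons, hk, true_and]
  rw [h_first_step, Fin.sum_univ_three]
  simp [sub_eq_add_neg]

theorem sum_Ico_sub_one_add_self_add_add_one {M : Type*} [AddCommMonoid M] (f : ℤ → M) {a b : ℤ}
    (h : a + 2 ≤ b) :
    ∑ j ∈ Ico a b, (f (j - 1) + f j + f (j + 1)) =
      ∑ j ∈ Ico (a + 1) (b - 1), f j + ∑ j ∈ Ico a b, f j + ∑ j ∈ Ico (a - 1) (b + 1), f j := by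
  have h_union : Ico (a - 1) (b - 1) ∪ Ico (a + 1) (b + 1) = Ico (a - 1) (b + 1) := by
    ext
    simp only [mem_union, mem_Ico]
    lia
  have h_inter : Ico (a - 1) (b - 1) ∩ Ico (a + 1) (b + 1) = Ico (a + 1) (b - 1) := by
    ext
    simp only [mem_inter, mem_Ico]
    lia
  have h_swap : ∑ j ∈ Ico (a - 1) (b + 1), f j + ∑ j ∈ Ico (a + 1) (b - 1), f j =
      ∑ j ∈ Ico (a - 1) (b - 1), f j + ∑ j ∈ Ico (a + 1) (b + 1), f j := by
    rw [← h_union, ← h_inter, sum_union_inter]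
  have h_shift_left : ∑ j ∈ Ico a b, f (j - 1) = ∑ j ∈ Ico (a - 1) (b - 1), f j :=
    sum_Ico_add' f a b (-1)
  have h_shift_right : ∑ j ∈ Ico a b, f (j + 1) = ∑ j ∈ Ico (a + 1) (b + 1), f j :=
    sum_Ico_add' f a b 1
  rw [sum_add_distrib, sum_add_distrib, h_shift_left, h_shift_right, add_right_comm, ← h_swap]
  abel

section Trinomial

/-- The trinomial coefficient of index `j` in row `n`, as an element of `R`: the coefficient of
`x ^ j` in `(x⁻¹ + 1 + x) ^ n`. Rows are indexed symmetrically by `-n ≤ j ≤ n`, so that `j = 0` is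
the central trinomial coefficient. -/
noncomputable def trinomialCoeff (R : Type*) [Semiring R] (n : ℕ) (j : ℤ) : R :=
  ((T (-1) + 1 + T 1 : R[T;T⁻¹]) ^ n).coeff j

variable (R : Type*)

section Semiring

variable [Semiring R]

theorem trinomialCoeff_zero_left (j : ℤ) : trinomialCoeff R 0 j = if j = 0 then 1 else 0 := by
  simp [trinomialCoeff, ← T_zero, eq_comm]

theorem trinomialCoeff_succ (n : ℕ) (j : ℤ) :
    trinomialCoeff R (n + 1) j =
      trinomialCoeff R n (j - 1) + trinomialCoeff R n j + trinomialCoeff R n (j + 1) := by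
  simp only [trinomialCoeff, pow_succ', add_mul, one_mul, T, AddMonoidAlgebra.coeff_add,
    Finsupp.add_apply, AddMonoidAlgebra.coeff_single_mul_apply, neg_neg, neg_add_eq_sub,
    add_comm 1 j]
  abel

theorem trinomialCoeff_neg (n : ℕ) (j : ℤ) :
    trinomialCoeff R n (-j) = trinomialCoeff R n j := by
  induction n generalizing j with
  | zero => simp [trinomialCoeff_zero_left]
  | succ n ih =>
    rw [trinomialCoeff_succ, trinomialCoeff_succ, ← ih (j - 1), ← ih j, ← ih (j + 1), neg_sub',
      neg_add', sub_neg_eq_add]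
    abel

theorem trinomialCoeff_succ_zero (n : ℕ) :
    trinomialCoeff R (n + 1) 0 = trinomialCoeff R n 0 + 2 * trinomialCoeff R n 1 := by
  rw [trinomialCoeff_succ, zero_sub, zero_add, trinomialCoeff_neg, two_mul]
  abel

-- Reflection principle: as functions of `k`, both sides satisfy the recurrence of
-- `motzkinPrefixFrom_succ`, and the interval of summation is empty at the barrier `k = -1`.
theorem natCast_motzkinPrefixFrom_eq_sum_trinomialCoeff (n : ℕ) {k : ℤ} (hk : -1 ≤ k) :
    (motzkinPrefixFrom n k : R) = ∑ j ∈ Ico (-k) (k + 2), trinomialCoeff R n j := by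
  induction n generalizing k with
  | zero =>
    have h_mem : 0 ∈ Ico (-k) (k + 2) ↔ 0 ≤ k := by
      rw [mem_Ico]
      lia
    simp [motzkinPrefixFrom_zero_left, trinomialCoeff_zero_left, -mem_Ico, h_mem]
  | succ n ih =>
    obtain rfl | hk : k = -1 ∨ 0 ≤ k := by lia
    · simp [motzkinPrefixFrom_of_neg]
    · simp only [trinomialCoeff_succ]
      rw [sum_Ico_sub_one_add_self_add_add_one _ (by lia), motzkinPrefixFrom_succ n hk]
      push_cast
      rw [ih (by lia), ih (by lia), ih (by lia)]
      ring_nf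

theorem natCast_motzkinPrefix (n : ℕ) :
    (motzkinPrefix n : R) = trinomialCoeff R n 0 + trinomialCoeff R n 1 := by
  rw [← motzkinPrefixFrom_zero_right, natCast_motzkinPrefixFrom_eq_sum_trinomialCoeff R n (by simp),
    show Ico (-0 : ℤ) (0 + 2) = {0, 1} from rfl, sum_pair zero_ne_one]

theorem two_mul_natCast_motzkinPrefix (n : ℕ) :
    2 * (motzkinPrefix n : R) = trinomialCoeff R n 0 + trinomialCoeff R (n + 1) 0 := by
  rw [natCast_motzkinPrefix, trinomialCoeff_succ_zero, mul_add, two_mul (trinomialCoeff R n 0),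
    add_assoc]

end Semiring

section Frobenius

variable [CommSemiring R] (p : ℕ) [Fact p.Prime] [CharP R p]

theorem trinomial_pow_char_mul (n : ℕ) :
    (T (-1) + 1 + T 1 : R[T;T⁻¹]) ^ (p * n) =
      AddMonoidAlgebra.mapDomain ((p : ℤ) * ·) ((T (-1) + 1 + T 1 : R[T;T⁻¹]) ^ n) := by
  have : CharP R[T;T⁻¹] p :=
    charP_of_injective_algebraMap (FaithfulSMul.algebraMap_injective R R[T;T⁻¹]) p
  rw [pow_mul, add_pow_char _ _ p, add_pow_char _ _ p, T_pow, T_pow, one_pow]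
  change _ = AddMonoidAlgebra.mapDomainRingHom R (AddMonoidHom.mulLeft (p : ℤ)) _
  rw [map_pow]
  simp only [map_add, map_one, T, AddMonoidAlgebra.mapDomainRingHom_apply,
    AddMonoidAlgebra.mapDomain_single]
  simp [-single_eq_C_mul_T]

theorem trinomialCoeff_char_mul_char_mul (n : ℕ) (j : ℤ) :
    trinomialCoeff R (p * n) (p * j) = trinomialCoeff R n j := by
  have hp : Function.Injective ((p : ℤ) * ·) :=
    mul_right_injective₀ (mod_cast (Fact.out : p.Prime).ne_zero)
  rw [trinomialCoeff, trinomial_pow_char_mul R p]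
  exact Finsupp.mapDomain_apply hp _ j

theorem trinomialCoeff_char_mul_of_not_dvd (n : ℕ) {j : ℤ} (hj : ¬ (p : ℤ) ∣ j) :
    trinomialCoeff R (p * n) j = 0 := by
  rw [trinomialCoeff, trinomial_pow_char_mul R p]
  refine Finsupp.mapDomain_of_notMem_range _ _ ?_
  rintro ⟨i, rfl⟩
  exact hj (dvd_mul_right _ i)

end Frobenius

end Trinomial

theorem three_mul_add_mem_T01 {m r : ℕ} (hr : r < 3) :
    3 * m + r ∈ T01 ↔ r ≠ 2 ∧ m ∈ T01 := by
  obtain ⟨rfl, rfl⟩ | h : m = 0 ∧ r = 0 ∨ (r ≠ 0 ∨ m ≠ 0) := by lia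
  · simp [T01]
  · simp only [T01, Set.mem_ofPred_eq, add_comm (3 * m),
      Nat.digits_add 3 (by norm_num) r m hr h, List.forall_mem_cons]
    lia

theorem indicator_T01_three_mul_add (M : Type*) [Zero M] [One M] {m r : ℕ} (hr : r < 3) :
    T01.indicator (1 : ℕ → M) (3 * m + r) = if r = 2 then 0 else T01.indicator 1 m := by
  classical simp [Set.indicator_apply, three_mul_add_mem_T01 hr, ite_and, ite_not]

section CommSemiring

variable (R : Type*) [CommSemiring R] [CharP R 3]

theorem trinomialCoeff_three_mul_zero (m : ℕ) :
    trinomialCoeff R (3 * m) 0 = trinomialCoeff R m 0 := by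
  simpa using trinomialCoeff_char_mul_char_mul R 3 m 0

theorem trinomialCoeff_three_mul_one (m : ℕ) : trinomialCoeff R (3 * m) 1 = 0 :=
  trinomialCoeff_char_mul_of_not_dvd R 3 m (by norm_num)

theorem trinomialCoeff_three_mul_add_one_zero (m : ℕ) :
    trinomialCoeff R (3 * m + 1) 0 = trinomialCoeff R m 0 := by
  rw [trinomialCoeff_succ_zero, trinomialCoeff_three_mul_zero, trinomialCoeff_three_mul_one,
    mul_zero, add_zero]

theorem trinomialCoeff_three_mul_add_two_zero (m : ℕ) :
    trinomialCoeff R (3 * m + 2) 0 = 0 := by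
  have h_one : trinomialCoeff R (3 * m + 1) 1 = trinomialCoeff R m 0 := by
    rw [trinomialCoeff_succ, sub_self, trinomialCoeff_three_mul_zero, trinomialCoeff_three_mul_one,
      one_add_one_eq_two, trinomialCoeff_char_mul_of_not_dvd R 3 m (by norm_num), add_zero,
      add_zero]
  have h3 : (3 : R) = 0 := CharP.cast_eq_zero R 3
  calc trinomialCoeff R (3 * m + 2) 0
      = trinomialCoeff R m 0 + 2 * trinomialCoeff R m 0 := by
        rw [trinomialCoeff_succ_zero, trinomialCoeff_three_mul_add_one_zero, h_one]
    _ = 3 * trinomialCoeff R m 0 := by ring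
    _ = 0 := by rw [h3, zero_mul]

theorem trinomialCoeff_zero_eq_indicator (n : ℕ) :
    trinomialCoeff R n 0 = T01.indicator 1 n := by
  induction n using Nat.strong_induction_on with
  | _ n ih =>
    obtain rfl | hn := eq_or_ne n 0
    · simp [trinomialCoeff_zero_left, T01]
    obtain ⟨m, r, hr, rfl⟩ : ∃ m r, r < 3 ∧ n = 3 * m + r :=
      ⟨n / 3, n % 3, n.mod_lt (by norm_num), (n.div_add_mod 3).symm⟩
    rw [indicator_T01_three_mul_add R hr, ← ih m (by lia)]
    interval_cases r
    · simp [trinomialCoeff_three_mul_zero]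
    · simp [trinomialCoeff_three_mul_add_one_zero]
    · simp [trinomialCoeff_three_mul_add_two_zero]

end CommSemiring

section CommRing

variable (R : Type*) [CommRing R] [CharP R 3]

theorem natCast_motzkinPrefix_eq_neg_indicator_add_indicator (n : ℕ) :
    (motzkinPrefix n : R) = -(T01.indicator 1 n + T01.indicator 1 (n + 1)) := by
  have h3 : (3 : R) = 0 := CharP.cast_eq_zero R 3
  rw [← trinomialCoeff_zero_eq_indicator, ← trinomialCoeff_zero_eq_indicator]
  linear_combination motzkinPrefix n * h3 - two_mul_natCast_motzkinPrefix R n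

theorem natCast_motzkinPrefix_three_mul (m : ℕ) :
    (motzkinPrefix (3 * m) : R) = T01.indicator 1 m := by
  have h3 : (3 : R) = 0 := CharP.cast_eq_zero R 3
  have h_zero : T01.indicator (1 : ℕ → R) (3 * m) = T01.indicator 1 m := by
    simpa using indicator_T01_three_mul_add R (m := m) (r := 0) (by norm_num)
  have h_one : T01.indicator (1 : ℕ → R) (3 * m + 1) = T01.indicator 1 m := by
    simpa using indicator_T01_three_mul_add R (m := m) (r := 1) (by norm_num)
  rw [natCast_motzkinPrefix_eq_neg_indicator_add_indicator, h_zero, h_one]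
  linear_combination -T01.indicator 1 m * h3

theorem natCast_motzkinPrefix_three_mul_add_one (m : ℕ) :
    (motzkinPrefix (3 * m + 1) : R) = -T01.indicator 1 m := by
  rw [natCast_motzkinPrefix_eq_neg_indicator_add_indicator, add_assoc,
    indicator_T01_three_mul_add R (by norm_num), indicator_T01_three_mul_add R (by norm_num)]
  simp

theorem natCast_motzkinPrefix_of_add_one_eq_three_mul {n m : ℕ} (h : n + 1 = 3 * m) :
    (motzkinPrefix n : R) = -T01.indicator 1 m := by
  obtain ⟨k, rfl⟩ : ∃ k, n = 3 * k + 2 := ⟨m - 1, by lia⟩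
  rw [natCast_motzkinPrefix_eq_neg_indicator_add_indicator, h, ← add_zero (3 * m),
    indicator_T01_three_mul_add R (by norm_num), indicator_T01_three_mul_add R (by norm_num)]
  simp

end CommRing

/-- Motzkin prefix numbers mod 3: `P n ≡ 1` if `n = 3m` with `m ∈ T(01)`;
`P n ≡ -1` if `n = 3m + 1` or `n = 3m - 1` with `m ∈ T(01)`;  `P n ≡ 0` otherwise. -/
theorem motzkinPrefix_mod_three (n : ℕ) :
    ((∃ m ∈ T01, n = 3 * m) → (motzkinPrefix n : ℤ) ≡ 1 [ZMOD 3]) ∧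
    ((∃ m ∈ T01, n = 3 * m + 1 ∨ n + 1 = 3 * m) → (motzkinPrefix n : ℤ) ≡ -1 [ZMOD 3]) ∧
    (¬ (∃ m ∈ T01, n = 3 * m ∨ n = 3 * m + 1 ∨ n + 1 = 3 * m) →
      (motzkinPrefix n : ℤ) ≡ 0 [ZMOD 3]) := by
  simp_rw [show (3 : ℤ) = (3 : ℕ) from rfl, ← ZMod.intCast_eq_intCast_iff, Int.cast_natCast]
  refine ⟨?_, ?_, fun h ↦ ?_⟩
  · rintro ⟨m, hm, rfl⟩
    simp [natCast_motzkinPrefix_three_mul, hm]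
  · rintro ⟨m, hm, rfl | hn⟩
    · simp [natCast_motzkinPrefix_three_mul_add_one, hm]
    · simp [natCast_motzkinPrefix_of_add_one_eq_three_mul _ hn, hm]
  · obtain ⟨m, hn⟩ : ∃ m, n = 3 * m ∨ n = 3 * m + 1 ∨ n + 1 = 3 * m := ⟨(n + 1) / 3, by lia⟩
    have hm : m ∉ T01 := fun hm ↦ h ⟨m, hm, hn⟩
    rcases hn with rfl | rfl | hn
    · simp [natCast_motzkinPrefix_three_mul, hm]
    · simp [natCast_motzkinPrefix_three_mul_add_one, hm]
    · simp [natCast_motzkinPrefix_of_add_one_eq_three_mul _ hn, hm]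
end

section
/- Let p be a prime and n a natural number. Then the number of k with 0 ≤ k ≤ n such that binomial(n, k) is not divisible by p equals ∏_{j=0}^{p−1} (j+1)^{δ_{p,j}(n)}, where δ_{p,j}(n) is the number of base-p digits of n equal to j. In particular, for p = 2, the number of odd entries in the n-th row of Pascal's triangle is 2^{δ(n)}, where δ(n) is the number of ones in the binary expansion of n. -/
/-! By Lucas' theorem, `p ∤ n.choose k` exactly when no base-`p` digit of `k` exceeds the digit of
`n` in the same position. Hence a digit `d` of `n` leaves `d + 1` choices for the corresponding
digit of `k`, and these choices are independent. -/

open Finset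

/-- The columns `k` of the `n`-th row of Pascal's triangle whose entry is not divisible by `p`.
Bounding `k` by `n` excludes nothing, because the entries further right are `0`. -/
def columnsNotDvd (p n : ℕ) : Finset ℕ :=
  {k ∈ range (n + 1) | ¬ p ∣ n.choose k}

section Columns

variable {p n k : ℕ}

theorem mem_columnsNotDvd : k ∈ columnsNotDvd p n ↔ ¬ p ∣ n.choose k := by
  rw [columnsNotDvd, mem_filter, mem_range, Order.lt_add_one_iff, and_iff_right_iff_imp]
  contrapose!
  intro hnk
  rw [Nat.choose_eq_zero_of_lt hnk]
  exact dvd_zero p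

theorem dvd_choose_iff_lt_of_lt_prime (hp : p.Prime) (hn : n < p) : p ∣ n.choose k ↔ n < k := by
  constructor
  · contrapose!
    intro hkn hdvd
    have hfactorial : p ∣ n.factorial := by
      rw [← Nat.choose_mul_factorial_mul_factorial hkn, mul_assoc]
      exact hdvd.mul_right _
    exact hn.not_ge (hp.dvd_factorial.mp hfactorial)
  · intro hnk
    rw [Nat.choose_eq_zero_of_lt hnk]
    exact dvd_zero p

theorem dvd_choose_iff_mod_lt_or_dvd_choose_div (hp : p.Prime) :
    p ∣ n.choose k ↔ n % p < k % p ∨ p ∣ (n / p).choose (k / p) := by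
  have := Fact.mk hp
  have lucas : n.choose k ≡ (n % p).choose (k % p) * (n / p).choose (k / p) [MOD p] :=
    Choose.choose_modEq_choose_mod_mul_choose_div_nat
  rw [lucas.dvd_iff dvd_rfl, hp.dvd_mul, dvd_choose_iff_lt_of_lt_prime hp (n.mod_lt hp.pos)]

theorem mem_columnsNotDvd_iff_mod_div (hp : p.Prime) :
    k ∈ columnsNotDvd p n ↔ k % p ≤ n % p ∧ k / p ∈ columnsNotDvd p (n / p) := by
  simp only [mem_columnsNotDvd,
    dvd_choose_iff_mod_lt_or_dvd_choose_div hp (n := n), not_or, not_lt]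

theorem card_columnsNotDvd_eq_mul_div (hp : p.Prime) (n : ℕ) :
    #(columnsNotDvd p n) = (n % p + 1) * #(columnsNotDvd p (n / p)) := by
  have mod_and_div_add_mul {a b : ℕ} (ha : a ≤ n % p) :
      (a + p * b) % p = a ∧ (a + p * b) / p = b := by
    have hap : a < p := ha.trans_lt (n.mod_lt hp.pos)
    exact ((Nat.div_mod_unique hp.pos).mpr ⟨rfl, hap⟩).symm
  calc #(columnsNotDvd p n)
      = #(range (n % p + 1) ×ˢ columnsNotDvd p (n / p)) := by
        refine card_nbij' (fun k ↦ (k % p, k / p)) (fun x ↦ x.1 + p * x.2) ?_ ?_ ?_ ?_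
        · intro k hk
          simpa [Order.lt_add_one_iff] using (mem_columnsNotDvd_iff_mod_div hp).mp hk
        · rintro ⟨a, b⟩ hab
          obtain ⟨ha, hb⟩ : a ≤ n % p ∧ b ∈ columnsNotDvd p (n / p) := by
            simpa using hab
          obtain ⟨hmod, hdiv⟩ := mod_and_div_add_mul (b := b) ha
          exact (mem_columnsNotDvd_iff_mod_div hp).mpr ⟨hmod.trans_le ha, hdiv.symm ▸ hb⟩
        · exact fun k _ ↦ k.mod_add_div p
        · rintro ⟨a, b⟩ hab
          have ha : a ≤ n % p := by
            simpa using (mem_product.mp hab).1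
          exact Prod.ext_iff.mpr (mod_and_div_add_mul ha)
    _ = (n % p + 1) * #(columnsNotDvd p (n / p)) := by rw [card_product, card_range]

theorem card_columnsNotDvd_eq_prod_map_digits (hp : p.Prime) (n : ℕ) :
    #(columnsNotDvd p n) = ((p.digits n).map (· + 1)).prod := by
  induction n using Nat.strong_induction_on with
  | _ n ih =>
    obtain rfl | hn := n.eq_zero_or_pos
    · simp [columnsNotDvd, filter_singleton, hp.ne_one]
    · rw [card_columnsNotDvd_eq_mul_div hp, ih _ (Nat.div_lt_self hn hp.one_lt),
        Nat.digits_def' hp.one_lt hn, List.map_cons, List.prod_cons]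

end Columns

theorem prod_list_map_count_of_subset {ι M : Type*} [DecidableEq ι] [CommMonoid M] (l : List ι)
    (f : ι → M) {s : Finset ι} (hs : l.toFinset ⊆ s) :
    (l.map f).prod = ∏ i ∈ s, f i ^ l.count i := by
  rw [prod_list_map_count]
  refine prod_subset hs fun i _ hi ↦ ?_
  rw [List.count_eq_zero_of_not_mem (mt List.mem_toFinset.mpr hi), pow_zero]

theorem toFinset_digits_subset_range {b : ℕ} (hb : 1 < b) (n : ℕ) :
    (b.digits n).toFinset ⊆ range b :=
  fun _ hd ↦ mem_range.mpr (Nat.digits_lt_base hb (List.mem_toFinset.mp hd))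

theorem card_columnsNotDvd {p : ℕ} (hp : p.Prime) (n : ℕ) :
    #(columnsNotDvd p n) = ∏ j ∈ range p, (j + 1) ^ (p.digits n).count j := by
  rw [card_columnsNotDvd_eq_prod_map_digits hp,
    prod_list_map_count_of_subset _ _ (toFinset_digits_subset_range hp.one_lt n)]

theorem card_columnsNotDvd_two (n : ℕ) :
    #(columnsNotDvd 2 n) = 2 ^ (Nat.digits 2 n).count 1 := by
  rw [card_columnsNotDvd Nat.prime_two, prod_range_succ, prod_range_one, zero_add, one_pow,
    one_mul]

/-- Gould's sequence generalized: for a prime `p`, the number of entries in the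
`n`-th row of Pascal's triangle not divisible by `p` equals
`∏_{j<p} (j+1)^{δ_{p,j}(n)}`, where `δ_{p,j}(n)` counts the base-`p` digits of `n`
equal to `j`.  In particular, for `p = 2` the number of odd entries in the `n`-th
row is `2^{δ(n)}` with `δ(n)` the number of ones in the binary expansion of `n`. -/
theorem gould_sequence (p : ℕ) (hp : p.Prime) (n : ℕ) :
    (((Finset.range (n + 1)).filter fun k => ¬ p ∣ n.choose k).card =
      ∏ j ∈ Finset.range p, (j + 1) ^ ((Nat.digits p n).count j)) ∧
    (((Finset.range (n + 1)).filter fun k => ¬ 2 ∣ n.choose k).card =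
      2 ^ ((Nat.digits 2 n).count 1)) := by
  constructor
  · exact card_columnsNotDvd hp n
  · exact card_columnsNotDvd_two n
end

section
/- For every natural number n, the partial sums of the central binomial coefficients satisfy: ∑_{k=0}^{n} binomial(2k, k) ≡ (−1)^{δ_3(n)} (mod 3) if n = 3m for some m ∈ T(01), and ∑_{k=0}^{n} binomial(2k, k) ≡ 0 (mod 3) otherwise. -/
/-!
By Lucas' theorem, `f n = C(2n, n)` modulo a prime `p` satisfies `f (r + p * q) = f r * f q` for
every digit `r < p`: either `2 * r < p` and doubling produces no carry, or both sides vanish.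
Hence `f n` is the product of the values of `f` at the base-`p` digits of `n`, and
`∑_{k < r + p * q} f k = (∑_{k < p} f k) * (∑_{k < q} f k) + (∑_{k < r} f k) * f q`.

For `p = 3` the digits `0`, `1`, `2` contribute `1`, `-1`, `0`, so `∑_{k < r} f k` vanishes for
`r = 0, 2, 3` and equals `1` for `r = 1`: a partial sum of `f` is either `0` or `f q`.
-/

open Finset (range)

/-- Strongly `b`-multiplicative functions, i.e. those whose value at `n` is the product of their
values at the base-`b` digits of `n`. The digit `r` comes first, as in the little-endian
`Nat.digits`, so that `R` need not be commutative. -/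
structure StronglyMultiplicative {R : Type*} [Monoid R] (b : ℕ) (f : ℕ → R) : Prop where
  map_zero : f 0 = 1
  map_add_mul : ∀ q r, r < b → f (r + b * q) = f r * f q

namespace StronglyMultiplicative

theorem eq_prod_map_digits {R : Type*} [Monoid R] {b : ℕ} {f : ℕ → R}
    (hf : StronglyMultiplicative b f) (hb : 1 < b) (n : ℕ) :
    f n = ((b.digits n).map f).prod := by
  induction n using Nat.strong_induction_on with
  | _ n ih =>
    rcases n.eq_zero_or_pos with rfl | hn
    · simpa using hf.map_zero
    · have hmod : n % b < b := Nat.mod_lt n (by omega)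
      calc f n = f (n % b + b * (n / b)) := by rw [Nat.mod_add_div]
        _ = f (n % b) * f (n / b) := hf.map_add_mul _ _ hmod
        _ = ((b.digits n).map f).prod := by
          rw [Nat.digits_def' hb hn, List.map_cons, List.prod_cons, ← ih _ (Nat.div_lt_self hn hb)]

variable {R : Type*} [Semiring R] {b : ℕ} {f : ℕ → R}

theorem sum_range_block (hf : StronglyMultiplicative b f) (q : ℕ) {r : ℕ} (hr : r ≤ b) :
    ∑ j ∈ range r, f (b * q + j) = (∑ j ∈ range r, f j) * f q := by
  rw [Finset.sum_mul]
  refine Finset.sum_congr rfl fun j (hj : j ∈ range r) ↦ ?_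
  rw [add_comm, hf.map_add_mul q j ((Finset.mem_range.mp hj).trans_le hr)]

theorem sum_range_mul (hf : StronglyMultiplicative b f) (q : ℕ) :
    ∑ k ∈ range (b * q), f k = (∑ k ∈ range b, f k) * ∑ k ∈ range q, f k := by
  induction q with
  | zero => simp
  | succ q ih =>
    rw [Nat.mul_succ, Finset.sum_range_add, ih, hf.sum_range_block q le_rfl,
      Finset.sum_range_succ, mul_add]

theorem sum_range_add_mul (hf : StronglyMultiplicative b f) (q : ℕ) {r : ℕ} (hr : r ≤ b) :
    ∑ k ∈ range (r + b * q), f k =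
      (∑ k ∈ range b, f k) * ∑ k ∈ range q, f k + (∑ k ∈ range r, f k) * f q := by
  rw [add_comm r, Finset.sum_range_add, hf.sum_range_mul, hf.sum_range_block q hr]

end StronglyMultiplicative

section Prime

variable {p : ℕ} [Fact p.Prime]

theorem cast_choose_eq_choose_mod_mul_choose_div (n k : ℕ) :
    (n.choose k : ZMod p) = (n % p).choose (k % p) * (n / p).choose (k / p) := by
  exact_mod_cast (ZMod.natCast_eq_natCast_iff _ _ p).mpr
    Choose.choose_modEq_choose_mod_mul_choose_div_nat

theorem cast_centralBinom_eq_zero {r : ℕ} (hr : r < p) (hp : p ≤ 2 * r) :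
    (r.centralBinom : ZMod p) = 0 := by
  rw [ZMod.natCast_eq_zero_iff, Nat.centralBinom, two_mul]
  exact (Fact.out : p.Prime).dvd_choose_add hr hr (two_mul r ▸ hp)

theorem cast_centralBinom_add_mul (q : ℕ) {r : ℕ} (hr : r < p) :
    ((r + p * q).centralBinom : ZMod p) = r.centralBinom * q.centralBinom := by
  have hdouble : 2 * (r + p * q) = 2 * r + p * (2 * q) := by ring
  rw [Nat.centralBinom, cast_choose_eq_choose_mod_mul_choose_div, hdouble,
    Nat.add_mul_mod_self_left, Nat.add_mul_mod_self_left, Nat.mod_eq_of_lt hr]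
  rcases lt_or_ge (2 * r) p with hlt | hge
  · rw [Nat.mod_eq_of_lt hlt, Nat.add_mul_div_left _ _ (by omega),
      Nat.add_mul_div_left _ _ (by omega), Nat.div_eq_of_lt hlt, Nat.div_eq_of_lt hr,
      zero_add, zero_add, Nat.centralBinom, Nat.centralBinom]
  · have hcarry : 2 * r % p < r := by
      rw [Nat.mod_eq_sub_mod hge, Nat.mod_eq_of_lt (by omega)]
      omega
    rw [Nat.choose_eq_zero_of_lt hcarry, cast_centralBinom_eq_zero hr hge]
    simp

theorem stronglyMultiplicative_cast_centralBinom :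
    StronglyMultiplicative p fun n ↦ (n.centralBinom : ZMod p) where
  map_zero := by simp
  map_add_mul q _ hr := cast_centralBinom_add_mul q hr

end Prime

theorem cast_centralBinom_of_mem_T01 {m : ℕ} (hm : m ∈ T01) :
    (m.centralBinom : ZMod 3) = (-1) ^ delta3 m := by
  rw [stronglyMultiplicative_cast_centralBinom.eq_prod_map_digits (by norm_num) m,
    List.prod_map_eq_pow_single 1, delta3]
  · congr 1
  · intro d hd1 hd
    obtain rfl : d = 0 := (hm d hd).resolve_right hd1
    simp

theorem cast_centralBinom_of_notMem_T01 {m : ℕ} (hm : m ∉ T01) :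
    (m.centralBinom : ZMod 3) = 0 := by
  obtain ⟨d, hd, hd01⟩ : ∃ d ∈ Nat.digits 3 m, ¬(d = 0 ∨ d = 1) := by simpa [T01] using hm
  obtain rfl : d = 2 := by
    have := Nat.digits_lt_base (by norm_num) hd
    omega
  rw [stronglyMultiplicative_cast_centralBinom.eq_prod_map_digits (by norm_num) m]
  exact List.prod_eq_zero (List.mem_map.mpr ⟨2, hd, by decide⟩)

theorem sum_range_add_three_mul_cast_centralBinom (q : ℕ) {r : ℕ} (hr : r ≤ 3) :
    ∑ k ∈ range (r + 3 * q), (k.centralBinom : ZMod 3) =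
      (∑ k ∈ range r, (k.centralBinom : ZMod 3)) * q.centralBinom := by
  have hperiod : ∑ k ∈ range 3, (k.centralBinom : ZMod 3) = 0 := by decide
  rw [stronglyMultiplicative_cast_centralBinom.sum_range_add_mul q hr, hperiod, zero_mul, zero_add]

theorem sum_range_three_mul_add_one_cast_centralBinom (m : ℕ) :
    ∑ k ∈ range (3 * m + 1), (k.centralBinom : ZMod 3) = m.centralBinom := by
  rw [add_comm, sum_range_add_three_mul_cast_centralBinom m (by norm_num)]
  simp

theorem sum_range_succ_cast_centralBinom_of_not_dvd {n : ℕ} (hn : ¬3 ∣ n) :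
    ∑ k ∈ range (n + 1), (k.centralBinom : ZMod 3) = 0 := by
  obtain ⟨r, hr, hsplit⟩ : ∃ r, (r = 2 ∨ r = 3) ∧ n + 1 = r + 3 * (n / 3) :=
    ⟨n % 3 + 1, by omega, by omega⟩
  have hsum : ∑ k ∈ range r, (k.centralBinom : ZMod 3) = 0 := by
    rcases hr with rfl | rfl <;> decide
  rw [hsplit, sum_range_add_three_mul_cast_centralBinom _ (by omega), hsum, zero_mul]

theorem delta3_three_mul (m : ℕ) : delta3 (3 * m) = delta3 m := by
  rcases m.eq_zero_or_pos with rfl | hm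
  · rfl
  · have hdigits : Nat.digits 3 (3 * m) = 0 :: Nat.digits 3 m := by
      simpa using Nat.digits_add 3 (by norm_num) 0 m (by norm_num) (Or.inr hm.ne')
    simp [delta3, hdigits]

/-- Partial sums of central binomial coefficients mod 3:
`∑_{k=0}^n C(2k, k) ≡ (-1)^{δ_3(n)} (mod 3)` if `n = 3m` with `m ∈ T(01)`, and
`∑_{k=0}^n C(2k, k) ≡ 0 (mod 3)` otherwise. -/
theorem sum_centralBinom_mod_three (n : ℕ) :
    ((∃ m ∈ T01, n = 3 * m) →
      (∑ k ∈ Finset.range (n + 1), ((2 * k).choose k : ℤ)) ≡ (-1) ^ delta3 n [ZMOD 3]) ∧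
    (¬ (∃ m ∈ T01, n = 3 * m) →
      (∑ k ∈ Finset.range (n + 1), ((2 * k).choose k : ℤ)) ≡ 0 [ZMOD 3]) := by
  have modEq_iff (a : ℤ) : ∑ k ∈ range (n + 1), ((2 * k).choose k : ℤ) ≡ a [ZMOD 3] ↔
      ∑ k ∈ range (n + 1), (k.centralBinom : ZMod 3) = a := by
    simpa [Nat.centralBinom] using
      (ZMod.intCast_eq_intCast_iff (∑ k ∈ range (n + 1), ((2 * k).choose k : ℤ)) a 3).symm
  rw [modEq_iff, modEq_iff, Int.cast_pow, Int.cast_neg, Int.cast_one, Int.cast_zero]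
  constructor
  · rintro ⟨m, hm, rfl⟩
    rw [sum_range_three_mul_add_one_cast_centralBinom, cast_centralBinom_of_mem_T01 hm,
      delta3_three_mul]
  · intro hn
    by_cases hdvd : 3 ∣ n
    · obtain ⟨m, rfl⟩ := hdvd
      have hm : m ∉ T01 := fun hm ↦ hn ⟨m, hm, rfl⟩
      rw [sum_range_three_mul_add_one_cast_centralBinom, cast_centralBinom_of_notMem_T01 hm]
    · exact sum_range_succ_cast_centralBinom_of_not_dvd hdvd
end

section
/- Let r and s be positive integers and for each natural number n set a_n(r, s) = ∑_{k=0}^{n} binomial(n, k)^r · binomial(n+k, k)^s. Then: if s is even, a_n(r, s) ≡ (−1)^{δ_3(n)} (mod 3) for all n; if s is odd and n ∈ T(02), then a_n(r, s) ≡ 1 (mod 3); and if s is odd and n ∉ T(02), then a_n(r, s) ≡ 0 (mod 3). (The cases r = s = 1 and r = 2, s = 1 give the central Delannoy numbers and the Apéry numbers, respectively.) -/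
/-!
By Lucas' theorem, modulo a prime `p` the summand `C(n,k)^r C(n+k,k)^s` is multiplicative over the
base-`p` digits of `n` and `k`: if the addition `n + k` carries, both sides vanish. Hence the sum is
congruent to the product of its values at the digits of `n`. Modulo `3` these values are `1` at the
digits `0` and `2`, and `1 + (-1)^s` at the digit `1`, so `a_n(r, s) ≡ (1 + (-1)^s)^{δ_3(n)}`.
-/

/-- `T(02)`: the natural numbers all of whose base-3 digits are `0` or `2`. -/
def T02 : Set ℕ := {n | ∀ d ∈ Nat.digits 3 n, d = 0 ∨ d = 2}

open Finset

/-- The summand `C(n,k)^r C(n+k,k)^s` of `a_n(r,s)`. -/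
def aperyDelannoyTerm (r s n k : ℕ) : ℤ := (n.choose k : ℤ) ^ r * ((n + k).choose k : ℤ) ^ s

/-- The number `a_n(r,s) = ∑_k C(n,k)^r C(n+k,k)^s`, which generalizes both the central Delannoy
numbers and the Apéry numbers. -/
def aperyDelannoy (r s n : ℕ) : ℤ := ∑ k ∈ range (n + 1), aperyDelannoyTerm r s n k

theorem sum_range_mul_eq_sum_sum {M : Type*} [AddCommMonoid M] (f : ℕ → M) (b m : ℕ) :
    ∑ k ∈ range (b * m), f k = ∑ q ∈ range m, ∑ j ∈ range b, f (b * q + j) := by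
  induction m with
  | zero => simp
  | succ m ih => rw [Nat.mul_succ, sum_range_add, ih, sum_range_succ]

theorem eq_prod_map_digits {M : Type*} [Monoid M] {b : ℕ} (hb : 1 < b) {f : ℕ → M}
    (f_zero : f 0 = 1) (f_mul_add : ∀ m, ∀ i < b, f (b * m + i) = f i * f m) (n : ℕ) :
    f n = ((Nat.digits b n).map f).prod := by
  induction n using Nat.strong_induction_on with
  | _ n ih =>
    obtain rfl | hn := eq_or_ne n 0
    · simp [f_zero]
    · rw [Nat.digits_eq_cons_digits_div hb hn, List.map_cons, List.prod_cons,
        ← ih _ (Nat.div_lt_self hn.pos hb),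
        ← f_mul_add _ _ (Nat.mod_lt n (Nat.zero_lt_of_lt hb)), Nat.div_add_mod]

section Prime

variable {p : ℕ} [Fact p.Prime] {i j : ℕ}

theorem cast_choose_mul_add_mul_add (hi : i < p) (hj : j < p) (m q : ℕ) :
    ((p * m + i).choose (p * q + j) : ZMod p) = i.choose j * m.choose q := by
  have hp : 0 < p := Nat.zero_lt_of_lt hi
  have lucas := Choose.choose_modEq_choose_mod_mul_choose_div_nat
    (n := p * m + i) (k := p * q + j) (p := p)
  simp only [Nat.mul_add_mod, Nat.mod_eq_of_lt hi, Nat.mod_eq_of_lt hj, Nat.mul_add_div hp,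
    Nat.div_eq_of_lt hi, Nat.div_eq_of_lt hj, add_zero] at lucas
  exact_mod_cast (ZMod.natCast_eq_natCast_iff _ _ _).2 lucas

theorem cast_choose_add_mul_add_mul_add (hi : i < p) (hj : j < p) (m q : ℕ) :
    ((p * m + i + (p * q + j)).choose (p * q + j) : ZMod p) =
      (i + j).choose j * (m + q).choose q := by
  obtain hlt | hle := lt_or_ge (i + j) p
  · rw [← cast_choose_mul_add_mul_add hlt hj]
    congr 2
    ring
  · -- The carry leaves the last digit `i + j - p` of the sum below `j`, so both sides vanish.
    have carry : p * m + i + (p * q + j) = p * (m + q + 1) + (i + j - p) := by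
      simp only [mul_add]
      omega
    have digit_lt : i + j - p < j := by omega
    have dvd : p ∣ (i + j).choose j := by
      rw [add_comm] at hle ⊢
      exact Nat.Prime.dvd_choose_add Fact.out hj hi hle
    rw [carry, cast_choose_mul_add_mul_add (by omega) hj, Nat.choose_eq_zero_of_lt digit_lt,
      (ZMod.natCast_eq_zero_iff _ _).2 dvd, Nat.cast_zero, zero_mul, zero_mul]

theorem cast_aperyDelannoyTerm_mul_add (hi : i < p) (hj : j < p) (r s m q : ℕ) :
    (aperyDelannoyTerm r s (p * m + i) (p * q + j) : ZMod p) =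
      aperyDelannoyTerm r s i j * aperyDelannoyTerm r s m q := by
  simp only [aperyDelannoyTerm, Int.cast_mul, Int.cast_pow, Int.cast_natCast]
  rw [cast_choose_mul_add_mul_add hi hj, cast_choose_add_mul_add_mul_add hi hj, mul_pow, mul_pow,
    mul_mul_mul_comm]

end Prime

theorem aperyDelannoyTerm_eq_zero_of_lt {r n k : ℕ} (hr : 0 < r) (hnk : n < k) (s : ℕ) :
    aperyDelannoyTerm r s n k = 0 := by
  rw [aperyDelannoyTerm, Nat.choose_eq_zero_of_lt hnk, Nat.cast_zero, zero_pow hr.ne', zero_mul]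

theorem aperyDelannoy_eq_sum_range_of_lt {r n N : ℕ} (hr : 0 < r) (hN : n < N) (s : ℕ) :
    aperyDelannoy r s n = ∑ k ∈ range N, aperyDelannoyTerm r s n k :=
  sum_subset (range_mono hN) fun _ _ hk ↦
    aperyDelannoyTerm_eq_zero_of_lt hr (by simpa using hk) s

theorem aperyDelannoy_zero (r s : ℕ) : aperyDelannoy r s 0 = 1 := by
  simp [aperyDelannoy, aperyDelannoyTerm]

theorem aperyDelannoy_one (r s : ℕ) : aperyDelannoy r s 1 = 1 + 2 ^ s := by
  simp [aperyDelannoy, aperyDelannoyTerm, sum_range_succ]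

theorem aperyDelannoy_two (r s : ℕ) : aperyDelannoy r s 2 = 1 + 2 ^ r * 3 ^ s + 6 ^ s := by
  simp [aperyDelannoy, aperyDelannoyTerm, sum_range_succ, Nat.choose]

theorem cast_aperyDelannoy_mul_add {p r i : ℕ} [Fact p.Prime] (hr : 0 < r) (hi : i < p)
    (s m : ℕ) :
    (aperyDelannoy r s (p * m + i) : ZMod p) = aperyDelannoy r s i * aperyDelannoy r s m := by
  have hN : p * m + i < p * (m + 1) := by
    rw [Nat.mul_succ]
    omega
  rw [aperyDelannoy_eq_sum_range_of_lt hr hN, aperyDelannoy_eq_sum_range_of_lt hr hi,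
    aperyDelannoy, sum_range_mul_eq_sum_sum]
  push_cast
  rw [sum_mul_sum, sum_comm]
  refine sum_congr rfl fun j hj ↦ sum_congr rfl fun q _ ↦ ?_
  exact cast_aperyDelannoyTerm_mul_add hi (mem_range.1 hj) r s m q

theorem cast_aperyDelannoy_eq_prod_digits (p : ℕ) [Fact p.Prime] {r : ℕ} (hr : 0 < r) (s n : ℕ) :
    (aperyDelannoy r s n : ZMod p) =
      ((Nat.digits p n).map fun d ↦ (aperyDelannoy r s d : ZMod p)).prod :=
  eq_prod_map_digits (f := fun d ↦ (aperyDelannoy r s d : ZMod p)) (Nat.Prime.one_lt Fact.out)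
    (by rw [aperyDelannoy_zero, Int.cast_one])
    (fun m _ hi ↦ cast_aperyDelannoy_mul_add hr hi s m) n

theorem cast_aperyDelannoy_of_ne_one {s d : ℕ} (hs : 0 < s) (hd : d < 3) (hd1 : d ≠ 1) (r : ℕ) :
    (aperyDelannoy r s d : ZMod 3) = 1 := by
  obtain rfl | rfl : d = 0 ∨ d = 2 := by omega
  · rw [aperyDelannoy_zero, Int.cast_one]
  · have h3 : (3 : ZMod 3) = 0 := rfl
    have h6 : (6 : ZMod 3) = 0 := rfl
    rw [aperyDelannoy_two]
    push_cast
    rw [h3, h6, zero_pow hs.ne', mul_zero, add_zero, add_zero]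

theorem aperyDelannoy_modEq_pow_delta3 {r s : ℕ} (hr : 0 < r) (hs : 0 < s) (n : ℕ) :
    aperyDelannoy r s n ≡ (1 + (-1) ^ s) ^ delta3 n [ZMOD 3] := by
  have h2 : (2 : ZMod 3) = -1 := rfl
  refine (ZMod.intCast_eq_intCast_iff _ _ 3).1 ?_
  rw [cast_aperyDelannoy_eq_prod_digits 3 hr, List.prod_map_eq_pow_single 1 _ fun d hd1 hd ↦
    cast_aperyDelannoy_of_ne_one hs (Nat.digits_lt_base (by norm_num) hd) hd1 r,
    aperyDelannoy_one, delta3]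
  push_cast
  rw [h2]

theorem mem_T02_iff_delta3_eq_zero {n : ℕ} : n ∈ T02 ↔ delta3 n = 0 := by
  rw [delta3, List.count_eq_zero]
  refine ⟨fun h h1 ↦ by simpa using h 1 h1, fun h d hd ↦ ?_⟩
  have hd3 : d < 3 := Nat.digits_lt_base (by norm_num) hd
  have hd1 : d ≠ 1 := ne_of_mem_of_not_mem hd h
  omega

/-- For positive `r`, `s`, the numbers `a_n(r,s) = ∑_k C(n,k)^r C(n+k,k)^s`
(central Delannoy numbers for `r = s = 1`, Apéry numbers for `r = 2`, `s = 1`)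
satisfy: `a_n(r,s) ≡ (-1)^{δ_3(n)} (mod 3)` if `s` is even;  `a_n(r,s) ≡ 1 (mod 3)`
if `s` is odd and `n ∈ T(02)`;  and `a_n(r,s) ≡ 0 (mod 3)` otherwise. -/
theorem apery_delannoy_mod_three (r s : ℕ) (hr : 0 < r) (hs : 0 < s) (n : ℕ) :
    (Even s →
      (∑ k ∈ Finset.range (n + 1), (n.choose k : ℤ) ^ r * ((n + k).choose k : ℤ) ^ s) ≡
        (-1) ^ delta3 n [ZMOD 3]) ∧
    (Odd s → n ∈ T02 →
      (∑ k ∈ Finset.range (n + 1), (n.choose k : ℤ) ^ r * ((n + k).choose k : ℤ) ^ s) ≡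
        1 [ZMOD 3]) ∧
    (Odd s → n ∉ T02 →
      (∑ k ∈ Finset.range (n + 1), (n.choose k : ℤ) ^ r * ((n + k).choose k : ℤ) ^ s) ≡
        0 [ZMOD 3]) := by
  have key : aperyDelannoy r s n ≡ (1 + (-1) ^ s) ^ delta3 n [ZMOD 3] :=
    aperyDelannoy_modEq_pow_delta3 hr hs n
  refine ⟨fun h_even ↦ ?_, fun h_odd hn ↦ ?_, fun h_odd hn ↦ ?_⟩
  · rw [h_even.neg_one_pow] at key
    have two_modEq : (1 + 1 : ℤ) ≡ -1 [ZMOD 3] := rfl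
    exact key.trans (two_modEq.pow _)
  · rwa [mem_T02_iff_delta3_eq_zero.1 hn, pow_zero] at key
  · rwa [h_odd.neg_one_pow, add_neg_cancel, zero_pow (mt mem_T02_iff_delta3_eq_zero.2 hn)] at key
end
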